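/- arXiv:0802.2161 — 2 statements merged into one kernel-verified Lean document; each statement's English description precedes it below -/
import Mathlib

section
/- Let d = 2 and let a > 0, γ > 0. Let V₁, V₂ : ℝ² → ℝ with V₁ continuously differentiable, satisfying |V₁(x)| ≤ a(1+|x|)^{−γ}, |V₂(x)| ≤ a(1+|x|)^{−γ−1} and ∂_rV₁(x) ≤ a(1+|x|)^{−γ−1} for all x. Then there exist τ₀ > 0 and B(τ₀) > 0 (depending on a, γ) and an absolute constant C (independent of ε and τ) such that for every ε ≠ 0, every τ ≥ B(τ₀), and every classical solution u of −Δu + (V₁+V₂)u ± iεu − τu = f with u, ∇u ∈ L²(ℝ²) and f ∈ L²(ℝ²), one has ‖∇u‖²_{X_{τ₀}} + τ‖u‖²_{X_{τ₀}} + sup_{R≥τ₀} R^{−2}∫_{|x|=R} |u(x)|² dσ_R(x) ≤ C‖f‖²_{X*_{τ₀}}. -/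
/-!
The estimate holds with `τ₀ = 1`, and it is a Morawetz (multiplier) estimate. Write
`w = (R² + |x|²)^{-1/2}` for `R ≥ 1` and test the equation with `w (x·∇ū + ū/2)`. Up to a
divergence, the real part of the result (`multiplier_identity`, applied to the real and the
imaginary part of `u`) contains `½ R² w³ (|∇u|² + τ|u|²)` with the good sign, and `R² w³ ≥ 1/(3R)` on
`B(0,R)` (`ball_le_weight`), so the supremum over `R ≥ 1` bounds
`Q = ‖∇u‖²_X + τ‖u‖²_X`. In dimension two the term in `|u|²` coming from `Δ(w)` has no sign, but it
is `O((1 + |x|)^{-3} |u|²)` and is treated like a short-range potential. The long-range potential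
enters only through `∂_r V₁` and through `R² w³ V₁`, both bounded by multiples of the profile
`m = a (1 + |x|)^{-γ-1}` of `V₂`. The outcome is `Sys.morawetz`. The integrations by parts are
justified by cutoffs and Fatou's lemma (`lintegral_le_of_le_add_div`), since only `u` and `∇u`
are known to be square integrable.

The right-hand side is controlled as follows.

* Potential terms: a dyadic decomposition gives `∫ m G ≤ K sup_R R⁻¹ ∫_{B(0,R)} G`
  (`weighted_le`), so that `∫ m |u| |∇u| = O(K/√τ) Q`, which is absorbed for large `τ`.
* Source terms: the `X`–`X*` duality (`duality`).
* The term `|ε| ∫ |u| |∇u|`: testing the equation with `ū` gives `|ε| ∫ |u|² ≤ A`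
  (`Sys.eps_mass`) and `∫ |∇u|² ≤ (τ + a) ∫ |u|² + A` (`Sys.energy`), where
  `A = ∫ |f| |u| + ∫ m |u|²`. For `|ε| ≤ τ` the term is thus `O(√τ A)`, and for `|ε| > τ` these two
  inequalities already bound `Q`. The arithmetic is in `absorb`.

The integrals over circles are bounded by the two `X` norms (`sphere_le`), by the fundamental
theorem of calculus along rays in polar coordinates.

Since neither `f` nor `V₂` is assumed measurable, both are replaced by the continuous function
`g = max (|f - V₂ u| - m |u|) 0 ≤ |f|`; the structure `Sys` records the resulting hypotheses.
-/

noncomputable section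
open MeasureTheory Metric Set ENNReal

abbrev Ed (d : ℕ) := EuclideanSpace ℝ (Fin d)

/-- partial derivative of a complex valued function -/
def pd {d : ℕ} (u : Ed d → ℂ) (i : Fin d) (x : Ed d) : ℂ :=
  fderiv ℝ u x (EuclideanSpace.single i 1)

/-- Laplacian of a complex valued function -/
def lap {d : ℕ} (u : Ed d → ℂ) (x : Ed d) : ℂ :=
  ∑ i, fderiv ℝ (pd u i) x (EuclideanSpace.single i 1)

/-- squared norm of the gradient, as an extended nonnegative real -/
def gradSq {d : ℕ} (u : Ed d → ℂ) (x : Ed d) : ℝ≥0∞ :=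
  ∑ i, (‖pd u i x‖₊ : ℝ≥0∞) ^ 2

/-- |u(x)|² as an extended nonnegative real -/
def usq {d : ℕ} (u : Ed d → ℂ) (x : Ed d) : ℝ≥0∞ := (‖u x‖₊ : ℝ≥0∞) ^ 2

/-- radial derivative ∂_r V (x) = (x/|x|)·∇V(x) -/
def radialDeriv {d : ℕ} (V : Ed d → ℝ) (x : Ed d) : ℝ :=
  fderiv ℝ V x x / ‖x‖

/-- Morrey–Campanato type quantity sup_{R>0} (1/R) ∫_{B(0,R)} g -/
def nX2 {d : ℕ} (g : Ed d → ℝ≥0∞) : ℝ≥0∞ :=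
  ⨆ (R : ℝ) (_ : 0 < R), (ENNReal.ofReal R)⁻¹ * ∫⁻ x in ball (0 : Ed d) R, g x

/-- dyadic shell C_j -/
def shell (d : ℕ) (j : ℤ) : Set (Ed d) := {x | (2:ℝ)^j < ‖x‖ ∧ ‖x‖ ≤ (2:ℝ)^(j+1)}

/-- the dual norm ‖f‖_{X*} applied to g = |f|² -/
def nXstar {d : ℕ} (g : Ed d → ℝ≥0∞) : ℝ≥0∞ :=
  ∑' j : ℤ, (ENNReal.ofReal ((2:ℝ)^(j+1)) * ∫⁻ x in shell d j, g x) ^ (1/2 : ℝ)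

/-- the index j₀ with 2^{j₀} < ρ ≤ 2^{j₀+1} -/
def jIdx (ρ : ℝ) : ℤ := ⌈Real.logb 2 ρ⌉ - 1

/-- sup_{R ≥ ρ} (1/R)∫_{B(0,R)} g -/
def nX2r {d : ℕ} (ρ : ℝ) (g : Ed d → ℝ≥0∞) : ℝ≥0∞ :=
  ⨆ (R : ℝ) (_ : ρ ≤ R), (ENNReal.ofReal R)⁻¹ * ∫⁻ x in ball (0 : Ed d) R, g x

/-- the dual norm ‖f‖_{X*_ρ} applied to g = |f|² -/
def nXstarr {d : ℕ} (ρ : ℝ) (g : Ed d → ℝ≥0∞) : ℝ≥0∞ :=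
  (∑' j : {j : ℤ // jIdx ρ ≤ j},
    (ENNReal.ofReal ((2:ℝ)^((j:ℤ)+1)) * ∫⁻ x in shell d (j:ℤ), g x) ^ (1/2 : ℝ))
  + (ENNReal.ofReal ρ * ∫⁻ x in ball (0 : Ed d) ρ, g x) ^ (1/2 : ℝ)

/-- integral of g over the sphere of radius R w.r.t. (d-1)-dimensional Hausdorff measure -/
def sphInt {d : ℕ} (R : ℝ) (g : Ed d → ℝ≥0∞) : ℝ≥0∞ :=
  ∫⁻ x in Metric.sphere (0 : Ed d) R, g x ∂(μH[(d:ℝ) - 1])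


/-! ### Integration by parts with cutoffs -/

/-- Moving the derivative from `F` onto the dilated cutoff `χ (c x)` gains a factor `c`. -/
lemma integral_cutoff_mul_lineDeriv {F D : Ed 2 → ℝ} {v : Ed 2}
    (hF : Continuous F) (hD : Continuous D)
    (hFD : ∀ x, HasLineDerivAt ℝ F (D x) x v) (hFint : Integrable F)
    (χ : ContDiffBump (0 : Ed 2)) {M : ℝ} (hM : ∀ x, |fderiv ℝ χ x v| ≤ M)
    {c : ℝ} (hc : 0 < c) :
    ∫ x, χ (c • x) * D x ≤ c * M * ∫ x, |F x| := by
  have hsm : ContDiff ℝ 1 (χ : Ed 2 → ℝ) := χ.contDiff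
  have hcs : HasCompactSupport (fun x : Ed 2 => χ (c • x)) :=
    χ.hasCompactSupport.comp_smul hc.ne'
  have hcont : Continuous (fun x : Ed 2 => χ (c • x)) :=
    χ.continuous.comp (continuous_const_smul c)
  have hdcont : Continuous (fun x : Ed 2 => c * fderiv ℝ χ (c • x) v) := by
    have := hsm.continuous_fderiv (by norm_num)
    fun_prop
  have hintg : Integrable (fun x : Ed 2 => (c * fderiv ℝ χ (c • x) v) * F x) := by
    refine (hFint.norm.const_mul (c * M)).mono' (hdcont.mul hF).aestronglyMeasurable ?_
    filter_upwards with x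
    rw [norm_mul, norm_mul, Real.norm_eq_abs c, abs_of_pos hc]
    gcongr
    exact hM _
  have key := integral_bilinear_hasLineDerivAt_right_eq_neg_left_of_integrable
    (μ := (volume : Measure (Ed 2))) (f := fun x : Ed 2 => χ (c • x))
    (f' := fun x => c * fderiv ℝ χ (c • x) v) (g := F) (g' := D) (v := v)
    (B := ContinuousLinearMap.mul ℝ ℝ) hintg
    (by
      simp only [ContinuousLinearMap.mul_apply']
      exact (hcont.mul hD).integrable_of_hasCompactSupport hcs.mul_right)
    (by
      simp only [ContinuousLinearMap.mul_apply']
      exact (hcont.mul hF).integrable_of_hasCompactSupport hcs.mul_right)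
    (by
      intro x _
      have h1 : HasFDerivAt (χ : Ed 2 → ℝ) (fderiv ℝ χ (c • x)) (c • x) :=
        (hsm.differentiable (by norm_num) _).hasFDerivAt
      have h2 : HasFDerivAt (fun x : Ed 2 => c • x) (c • ContinuousLinearMap.id ℝ (Ed 2)) x :=
        (hasFDerivAt_id x).const_smul c
      have h3 := (h1.comp x h2).hasLineDerivAt v
      simpa using! h3)
    (fun x _ => hFD x)
  simp only [ContinuousLinearMap.mul_apply'] at key
  rw [key, ← integral_const_mul, ← integral_neg]
  refine integral_mono hintg.neg (hFint.abs.const_mul _) fun x => ?_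
  refine (neg_le_abs _).trans ?_
  rw [abs_mul, abs_mul, abs_of_pos hc]
  gcongr
  exact hM _

/-- If `good ≤ bad + div F` pointwise with `F` integrable, then `∫ good ≤ ∫ bad`. The divergence
itself need not be integrable: one tests against the cutoffs `χ (x / (n + 1))`, moves the derivative
onto the cutoff and uses Fatou's lemma. -/
lemma lintegral_le_of_le_add_div {F D : Fin 2 → Ed 2 → ℝ} {v : Fin 2 → Ed 2}
    (hF : ∀ i, Continuous (F i)) (hD : ∀ i, Continuous (D i))
    (hFD : ∀ i x, HasLineDerivAt ℝ (F i) (D i x) x (v i)) (hFint : ∀ i, Integrable (F i))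
    {good bad : Ed 2 → ℝ} (hg : Continuous good) (hb : Continuous bad)
    (hg0 : ∀ x, 0 ≤ good x) (hb0 : ∀ x, 0 ≤ bad x)
    (hle : ∀ x, good x ≤ bad x + (D 0 x + D 1 x)) :
    ∫⁻ x, ENNReal.ofReal (good x) ≤ ∫⁻ x, ENNReal.ofReal (bad x) := by
  by_cases htop : ∫⁻ x, ENNReal.ofReal (bad x) = ⊤
  · rw [htop]; exact le_top
  have hbint : Integrable bad :=
    (lintegral_ofReal_ne_top_iff_integrable hb.aestronglyMeasurable
      (Filter.Eventually.of_forall hb0)).1 htop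
  let χ : ContDiffBump (0 : Ed 2) := ⟨1, 2, one_pos, one_lt_two⟩
  have hsm : ContDiff ℝ 1 (χ : Ed 2 → ℝ) := χ.contDiff
  have hM : ∀ i, ∃ M, ∀ x, |fderiv ℝ χ x (v i)| ≤ M := by
    intro i
    have h1 : Continuous (fun x => fderiv ℝ χ x (v i)) := by
      have := hsm.continuous_fderiv (by norm_num)
      fun_prop
    have h2 : HasCompactSupport (fun x => fderiv ℝ χ x (v i)) :=
      χ.hasCompactSupport.fderiv_apply ℝ (v i)
    obtain ⟨M, hM⟩ := h1.bounded_above_of_compact_support h2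
    exact ⟨M, hM⟩
  choose M hM using hM
  set K : ℝ := M 0 * (∫ x, |F 0 x|) + M 1 * ∫ x, |F 1 x| with hK
  let c : ℕ → ℝ := fun n => 1 / ((n : ℝ) + 1)
  have hc : ∀ n, 0 < c n := fun n => by positivity
  have hcl : Filter.Tendsto c Filter.atTop (nhds 0) := tendsto_one_div_add_atTop_nhds_zero_nat
  have hcs : ∀ n, HasCompactSupport (fun x : Ed 2 => χ (c n • x)) :=
    fun n => χ.hasCompactSupport.comp_smul (hc n).ne'
  have hcont : ∀ n, Continuous (fun x : Ed 2 => χ (c n • x)) :=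
    fun n => χ.continuous.comp (continuous_const_smul (c n))
  have hI : ∀ n (φ : Ed 2 → ℝ), Continuous φ → Integrable (fun x => χ (c n • x) * φ x) :=
    fun n φ hφ => ((hcont n).mul hφ).integrable_of_hasCompactSupport (hcs n).mul_right
  have hstep : ∀ n, ∫⁻ x, ENNReal.ofReal (χ (c n • x) * good x)
      ≤ ENNReal.ofReal ((∫ x, bad x) + c n * K) := by
    intro n
    rw [← ofReal_integral_eq_lintegral_ofReal (hI n _ hg)
      (Filter.Eventually.of_forall fun x => mul_nonneg χ.nonneg (hg0 x))]
    refine ENNReal.ofReal_le_ofReal ?_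
    have h0 := integral_cutoff_mul_lineDeriv (hF 0) (hD 0) (hFD 0) (hFint 0) χ (hM 0) (hc n)
    have h1 := integral_cutoff_mul_lineDeriv (hF 1) (hD 1) (hFD 1) (hFint 1) χ (hM 1) (hc n)
    calc ∫ x, χ (c n • x) * good x
        ≤ ∫ x, (bad x + (χ (c n • x) * D 0 x + χ (c n • x) * D 1 x)) := by
          refine integral_mono (hI n _ hg)
            (hbint.add ((hI n _ (hD 0)).add (hI n _ (hD 1)))) fun x => ?_
          have h2 : χ (c n • x) * good x ≤ χ (c n • x) * (bad x + (D 0 x + D 1 x)) :=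
            mul_le_mul_of_nonneg_left (hle x) χ.nonneg
          have h3 : χ (c n • x) * bad x ≤ bad x := mul_le_of_le_one_left (hb0 x) χ.le_one
          simp only
          linarith
      _ = (∫ x, bad x) + ((∫ x, χ (c n • x) * D 0 x) + ∫ x, χ (c n • x) * D 1 x) := by
          rw [← integral_add (hI n _ (hD 0)) (hI n _ (hD 1))]
          exact integral_add hbint ((hI n _ (hD 0)).add (hI n _ (hD 1)))
      _ ≤ _ := by rw [hK]; linarith
  have hlim : Filter.Tendsto (fun n => ENNReal.ofReal ((∫ x, bad x) + c n * K)) Filter.atTop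
      (nhds (∫⁻ x, ENNReal.ofReal (bad x))) := by
    rw [← ofReal_integral_eq_lintegral_ofReal hbint (Filter.Eventually.of_forall hb0)]
    refine ENNReal.tendsto_ofReal ?_
    simpa using (hcl.mul_const K).const_add (∫ x, bad x)
  have hpt : ∀ x, Filter.liminf (fun n => ENNReal.ofReal (χ (c n • x) * good x)) Filter.atTop
      = ENNReal.ofReal (good x) := by
    intro x
    refine Filter.Tendsto.liminf_eq (ENNReal.tendsto_ofReal ?_)
    have h1 : Filter.Tendsto (fun n => c n • x) Filter.atTop (nhds ((0 : ℝ) • x)) :=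
      hcl.smul_const x
    have h2 := (χ.continuous.tendsto _).comp h1
    have h3 : χ ((0 : ℝ) • x) = 1 := by
      rw [zero_smul]
      exact χ.one_of_mem_closedBall (mem_closedBall_self χ.rIn_pos.le)
    rw [h3] at h2
    simpa using h2.mul_const (good x)
  calc ∫⁻ x, ENNReal.ofReal (good x)
      = ∫⁻ x, Filter.liminf (fun n => ENNReal.ofReal (χ (c n • x) * good x)) Filter.atTop := by
        simp only [hpt]
    _ ≤ Filter.liminf (fun n => ∫⁻ x, ENNReal.ofReal (χ (c n • x) * good x)) Filter.atTop :=
        lintegral_liminf_le fun n =>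
          (ENNReal.continuous_ofReal.comp ((hcont n).mul hg)).measurable
    _ ≤ Filter.liminf (fun n => ENNReal.ofReal ((∫ x, bad x) + c n * K)) Filter.atTop :=
        Filter.liminf_le_liminf (Filter.Eventually.of_forall hstep)
    _ = _ := hlim.liminf_eq

/-! ### The multiplier identity -/

/-- The `i`-th coordinate direction of the plane. -/
abbrev dir (i : Fin 2) : Ed 2 := EuclideanSpace.single i 1

/-- `p` is a real `C²` function with partial derivatives `p1 i = ∂ᵢp` and
`p2 i j = ∂ᵢ∂ⱼp`, recorded as explicit functions. -/
structure Jet (p : Ed 2 → ℝ) (p1 : Fin 2 → Ed 2 → ℝ) (p2 : Fin 2 → Fin 2 → Ed 2 → ℝ) :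
    Prop where
  c0 : Continuous p
  c1 : ∀ i, Continuous (p1 i)
  c2 : ∀ i j, Continuous (p2 i j)
  d1 : ∀ i x, HasLineDerivAt ℝ p (p1 i x) x (dir i)
  d2 : ∀ i j x, HasLineDerivAt ℝ (p1 j) (p2 i j x) x (dir i)
  symm : ∀ x, p2 1 0 x = p2 0 1 x

/-- Used with `L` the real and the imaginary part. -/
lemma Jet.of_contDiff {u : Ed 2 → ℂ} (hu : ContDiff ℝ 2 u) (L : ℂ →L[ℝ] ℝ) :
    Jet (fun x => L (u x)) (fun i x => L (pd u i x))
      (fun i j x => L (fderiv ℝ (pd u j) x (dir i))) := by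
  have hfd : ContDiff ℝ 1 (fderiv ℝ u) := hu.fderiv_right (by norm_num)
  have hpd : ∀ i, ContDiff ℝ 1 (pd u i) := fun i => hfd.clm_apply contDiff_const
  have hL : ∀ (φ : Ed 2 → ℂ), ContDiff ℝ 1 φ → ∀ i x,
      HasLineDerivAt ℝ (fun x => L (φ x)) (L (fderiv ℝ φ x (dir i))) x (dir i) := by
    intro φ hφ i x
    exact (L.hasFDerivAt.comp x (hφ.differentiable (by norm_num) x).hasFDerivAt).hasLineDerivAt
      (dir i)
  refine ⟨L.continuous.comp hu.continuous, fun i => L.continuous.comp (hpd i).continuous,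
    fun i j => L.continuous.comp ?_, fun i x => hL u (hu.of_le (by norm_num)) i x,
    fun i j x => hL _ (hpd j) i x, fun x => ?_⟩
  · have := (hpd j).continuous_fderiv (by norm_num)
    fun_prop
  · have hsym : IsSymmSndFDerivAt ℝ u x := hu.contDiffAt.isSymmSndFDerivAt (by simp)
    have hpd' : ∀ j i, fderiv ℝ (pd u j) x (dir i) = fderiv ℝ (fderiv ℝ u) x (dir i) (dir j) := by
      intro j i
      have h := ((hfd.differentiable (by norm_num) x).hasFDerivAt).clm_apply
        (hasFDerivAt_const (dir j) x)
      have h' : HasFDerivAt (pd u j) _ x := h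
      rw [h'.fderiv]
      simp
    simp only [hpd']
    rw [hsym.eq]

/-- The radial weight `(R² + |x|²)^{-1/2}`. -/
def wt (R : ℝ) (x : Ed 2) : ℝ := (√(R ^ 2 + (x 0 ^ 2 + x 1 ^ 2)))⁻¹

lemma wt_pos {R : ℝ} (hR : 1 ≤ R) (x : Ed 2) : 0 < wt R x := by
  unfold wt; positivity

lemma wt_sq {R : ℝ} (hR : 1 ≤ R) (x : Ed 2) :
    wt R x ^ 2 * (R ^ 2 + (x 0 ^ 2 + x 1 ^ 2)) = 1 := by
  have h : 0 < R ^ 2 + (x 0 ^ 2 + x 1 ^ 2) := by positivity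
  unfold wt
  rw [inv_pow, Real.sq_sqrt h.le, inv_mul_cancel₀ h.ne']

lemma continuous_wt {R : ℝ} (hR : 1 ≤ R) : Continuous (wt R) := by
  unfold wt
  refine Continuous.inv₀ (by fun_prop) fun x => ?_
  have : 0 < R ^ 2 + (x 0 ^ 2 + x 1 ^ 2) := by positivity
  positivity

lemma hasLineDerivAt_coord (i j : Fin 2) (x : Ed 2) :
    HasLineDerivAt ℝ (fun y : Ed 2 => y j) (if j = i then 1 else 0) x (dir i) := by
  have h := (EuclideanSpace.proj j : Ed 2 →L[ℝ] ℝ).hasFDerivAt (x := x) |>.hasLineDerivAt (dir i)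
  simpa [dir] using! h

lemma hasLineDerivAt_wt {R : ℝ} (hR : 1 ≤ R) (i : Fin 2) (x : Ed 2) :
    HasLineDerivAt ℝ (wt R) (-(x i) * wt R x ^ 3) x (dir i) := by
  have hpos : 0 < R ^ 2 + (x 0 ^ 2 + x 1 ^ 2) := by positivity
  have h0 : HasDerivAt (fun t : ℝ => (x + t • dir i) 0) (if (0 : Fin 2) = i then 1 else 0) 0 :=
    hasLineDerivAt_coord i 0 x
  have h1 : HasDerivAt (fun t : ℝ => (x + t • dir i) 1) (if (1 : Fin 2) = i then 1 else 0) 0 :=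
    hasLineDerivAt_coord i 1 x
  have h2 := ((((h0.fun_pow 2).fun_add (h1.fun_pow 2)).const_add (R ^ 2)).sqrt (by simpa using hpos.ne')).fun_inv
    (by simpa using (Real.sqrt_pos.2 hpos).ne')
  have hs := Real.sq_sqrt hpos.le
  have hs0 := Real.sqrt_pos.2 hpos
  refine HasDerivAt.congr_deriv h2 ?_
  unfold wt
  simp only [zero_smul, add_zero]
  set s := √(R ^ 2 + (x 0 ^ 2 + x 1 ^ 2))
  fin_cases i <;> · simp; field_simp

/-- The flux field of the multiplier identity for `w (x·∇p + p/2)`. -/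
def mF (R : ℝ) (W p : Ed 2 → ℝ) (p1 : Fin 2 → Ed 2 → ℝ) (i : Fin 2) (x : Ed 2) : ℝ :=
  -(wt R x * p1 i x * (x 0 * p1 0 x + x 1 * p1 1 x))
    + 1 / 2 * (wt R x * x i * (p1 0 x ^ 2 + p1 1 x ^ 2))
    - 1 / 2 * (wt R x * p x * p1 i x)
    - 1 / 4 * (x i * wt R x ^ 3 * p x ^ 2)
    + 1 / 2 * (W x * wt R x * x i * p x ^ 2)

/-- The partial derivative `∂ᵢ` of the flux component `mF … i`. -/
def mD (R : ℝ) (W p : Ed 2 → ℝ) (W1 p1 : Fin 2 → Ed 2 → ℝ) (p2 : Fin 2 → Fin 2 → Ed 2 → ℝ)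
    (i : Fin 2) (x : Ed 2) : ℝ :=
  -((-(x i) * wt R x ^ 3 * p1 i x + wt R x * p2 i i x) * (x 0 * p1 0 x + x 1 * p1 1 x)
      + wt R x * p1 i x * (p1 i x + x 0 * p2 i 0 x + x 1 * p2 i 1 x))
    + 1 / 2 * ((-(x i) * wt R x ^ 3 * x i + wt R x) * (p1 0 x ^ 2 + p1 1 x ^ 2)
      + wt R x * x i * (2 * p1 0 x * p2 i 0 x + 2 * p1 1 x * p2 i 1 x))
    - 1 / 2 * (-(x i) * wt R x ^ 3 * p x * p1 i x + wt R x * p1 i x * p1 i x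
      + wt R x * p x * p2 i i x)
    - 1 / 4 * (wt R x ^ 3 * p x ^ 2 - 3 * x i * wt R x ^ 2 * (x i * wt R x ^ 3) * p x ^ 2
      + x i * wt R x ^ 3 * (2 * p x * p1 i x))
    + 1 / 2 * (W1 i x * wt R x * x i * p x ^ 2 + W x * (-(x i) * wt R x ^ 3) * x i * p x ^ 2
      + W x * wt R x * p x ^ 2 + W x * wt R x * x i * (2 * p x * p1 i x))

lemma hasLineDerivAt_mF {R : ℝ} (hR : 1 ≤ R) {W p : Ed 2 → ℝ} {W1 p1 : Fin 2 → Ed 2 → ℝ}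
    {p2 : Fin 2 → Fin 2 → Ed 2 → ℝ} (hp : Jet p p1 p2)
    (hW : ∀ i x, HasLineDerivAt ℝ W (W1 i x) x (dir i)) (i : Fin 2) (x : Ed 2) :
    HasLineDerivAt ℝ (mF R W p p1 i) (mD R W p W1 p1 p2 i x) x (dir i) := by
  have hX0 : HasDerivAt (fun t : ℝ => (x + t • dir i) 0) (if (0 : Fin 2) = i then 1 else 0) 0 :=
    hasLineDerivAt_coord i 0 x
  have hX1 : HasDerivAt (fun t : ℝ => (x + t • dir i) 1) (if (1 : Fin 2) = i then 1 else 0) 0 :=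
    hasLineDerivAt_coord i 1 x
  have hXi : HasDerivAt (fun t : ℝ => (x + t • dir i) i) 1 0 := by
    have := hasLineDerivAt_coord i i x
    rw [if_pos rfl] at this
    exact this
  have hw : HasDerivAt (fun t : ℝ => wt R (x + t • dir i)) _ 0 := hasLineDerivAt_wt hR i x
  have hp0 : HasDerivAt (fun t : ℝ => p (x + t • dir i)) _ 0 := hp.d1 i x
  have hq0 : HasDerivAt (fun t : ℝ => p1 0 (x + t • dir i)) _ 0 := hp.d2 i 0 x
  have hq1 : HasDerivAt (fun t : ℝ => p1 1 (x + t • dir i)) _ 0 := hp.d2 i 1 x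
  have hqi : HasDerivAt (fun t : ℝ => p1 i (x + t • dir i)) _ 0 := hp.d2 i i x
  have hWi : HasDerivAt (fun t : ℝ => W (x + t • dir i)) _ 0 := hW i x
  have hX := (hX0.fun_mul hq0).fun_add (hX1.fun_mul hq1)
  have t1 := ((hw.fun_mul hqi).fun_mul hX).fun_neg
  have t2 := ((hw.fun_mul hXi).fun_mul ((hq0.fun_pow 2).fun_add (hq1.fun_pow 2))).const_mul (1 / 2 : ℝ)
  have t3 := ((hw.fun_mul hp0).fun_mul hqi).const_mul (1 / 2 : ℝ)
  have t4 := ((hXi.fun_mul (hw.fun_pow 3)).fun_mul (hp0.fun_pow 2)).const_mul (1 / 4 : ℝ)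
  have t5 := (((hWi.fun_mul hw).fun_mul hXi).fun_mul (hp0.fun_pow 2)).const_mul (1 / 2 : ℝ)
  have key := (((t1.fun_add t2).fun_sub t3).fun_sub t4).fun_add t5
  refine HasDerivAt.congr_deriv key ?_
  unfold mD
  simp only [zero_smul, add_zero]
  fin_cases i <;> · simp; ring

lemma continuous_mF {R : ℝ} (hR : 1 ≤ R) {W p : Ed 2 → ℝ} {p1 : Fin 2 → Ed 2 → ℝ}
    {p2 : Fin 2 → Fin 2 → Ed 2 → ℝ} (hp : Jet p p1 p2) (hW : Continuous W) (i : Fin 2) :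
    Continuous (mF R W p p1 i) := by
  have h0 := hp.c0
  have h1 := hp.c1
  have hw := continuous_wt hR
  unfold mF
  fun_prop

lemma continuous_mD {R : ℝ} (hR : 1 ≤ R) {W p : Ed 2 → ℝ} {W1 p1 : Fin 2 → Ed 2 → ℝ}
    {p2 : Fin 2 → Fin 2 → Ed 2 → ℝ} (hp : Jet p p1 p2) (hW : Continuous W)
    (hW1 : ∀ i, Continuous (W1 i)) (i : Fin 2) :
    Continuous (mD R W p W1 p1 p2 i) := by
  have h0 := hp.c0
  have h1 := hp.c1
  have h2 := hp.c2
  have hw := continuous_wt hR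
  unfold mD
  fun_prop

/-- The pointwise multiplier (Morawetz) identity for `-Δp + W p` tested with `w (x·∇p + p/2)`.
Only the symmetry of the second derivatives and the algebraic relation for `w²` are used. -/
lemma multiplier_identity {R : ℝ} (hR : 1 ≤ R) {W p : Ed 2 → ℝ} {W1 p1 : Fin 2 → Ed 2 → ℝ}
    {p2 : Fin 2 → Fin 2 → Ed 2 → ℝ} (hp : Jet p p1 p2) (x : Ed 2) :
    (-(p2 0 0 x + p2 1 1 x) + W x * p x)
        * (wt R x * (x 0 * p1 0 x + x 1 * p1 1 x + p x / 2))
      = mD R W p W1 p1 p2 0 x + mD R W p W1 p1 p2 1 x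
        + 1 / 2 * (wt R x ^ 3 * (x 0 ^ 2 + x 1 ^ 2) + wt R x) * (p1 0 x ^ 2 + p1 1 x ^ 2)
        - wt R x ^ 3 * (x 0 * p1 0 x + x 1 * p1 1 x) ^ 2
        + (1 / 2 * wt R x ^ 3 - 3 / 4 * (x 0 ^ 2 + x 1 ^ 2) * wt R x ^ 5) * p x ^ 2
        - 1 / 2 * (wt R x * (x 0 * W1 0 x + x 1 * W1 1 x)) * p x ^ 2
        - 1 / 2 * W x * (R ^ 2 * wt R x ^ 3) * p x ^ 2 := by
  have hs : R ^ 2 * wt R x ^ 3 = wt R x - (x 0 ^ 2 + x 1 ^ 2) * wt R x ^ 3 := by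
    linear_combination wt R x * wt_sq hR x
  rw [hs]
  unfold mD
  rw [hp.symm x]
  ring

/-! ### The pointwise Morawetz inequality -/

lemma inner_le_of_sq {x y z t A B : ℝ} (hA : 0 ≤ A) (hB : 0 ≤ B) (h1 : x ^ 2 + y ^ 2 ≤ A ^ 2)
    (h2 : z ^ 2 + t ^ 2 ≤ B ^ 2) : x * z + y * t ≤ A * B := by
  have h3 : (x * z + y * t) ^ 2 ≤ (A * B) ^ 2 := by
    have : (x ^ 2 + y ^ 2) * (z ^ 2 + t ^ 2) ≤ A ^ 2 * B ^ 2 :=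
      mul_le_mul h1 h2 (by positivity) (by positivity)
    nlinarith [sq_nonneg (x * t - y * z)]
  exact (le_abs_self _).trans (abs_le_of_sq_le_sq h3 (by positivity))

lemma wt_mul_radial_sq_le {R : ℝ} (hR : 1 ≤ R) (x : Ed 2) (y z : ℝ) :
    (wt R x * (x 0 * y + x 1 * z)) ^ 2 ≤ y ^ 2 + z ^ 2 := by
  have h := wt_sq hR x
  have h1 : wt R x ^ 2 * (x 0 ^ 2 + x 1 ^ 2) ≤ 1 := by
    have : 0 ≤ wt R x ^ 2 * R ^ 2 := by positivity
    linarith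
  have h2 : (x 0 * y + x 1 * z) ^ 2 ≤ (x 0 ^ 2 + x 1 ^ 2) * (y ^ 2 + z ^ 2) := by
    nlinarith [sq_nonneg (x 0 * z - x 1 * y)]
  calc (wt R x * (x 0 * y + x 1 * z)) ^ 2 = wt R x ^ 2 * (x 0 * y + x 1 * z) ^ 2 := by ring
    _ ≤ wt R x ^ 2 * ((x 0 ^ 2 + x 1 ^ 2) * (y ^ 2 + z ^ 2)) := by gcongr
    _ = (wt R x ^ 2 * (x 0 ^ 2 + x 1 ^ 2)) * (y ^ 2 + z ^ 2) := by ring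
    _ ≤ 1 * (y ^ 2 + z ^ 2) := by gcongr
    _ = _ := one_mul _

lemma wt_le_one {R : ℝ} (hR : 1 ≤ R) (x : Ed 2) : wt R x ≤ 1 := by
  have h := wt_sq hR x
  have h0 := wt_pos hR x
  by_contra! hlt
  nlinarith [sq_nonneg (x 0), sq_nonneg (x 1), mul_nonneg (sq_nonneg (wt R x)) (sq_nonneg (x 0)),
    mul_nonneg (sq_nonneg (wt R x)) (sq_nonneg (x 1)), mul_self_nonneg (wt R x),
    mul_nonneg (sq_nonneg (wt R x)) (by nlinarith : 0 ≤ R ^ 2 - 1)]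

/-- Lower bound for the quadratic part of the multiplier identity of a single real function. The
angular part of the gradient is dropped; `m` dominates the terms in `V`, `∂_r V` and the
zeroth-order term without a sign. -/
lemma multiplier_lower {R : ℝ} (hR : 1 ≤ R) {V p : Ed 2 → ℝ} {V1 p1 : Fin 2 → Ed 2 → ℝ}
    {p2 : Fin 2 → Fin 2 → Ed 2 → ℝ} (hp : Jet p p1 p2) (x : Ed 2) {τ m : ℝ}
    (hV : |V x| * (R ^ 2 * wt R x ^ 3) ≤ 3 / 2 * m)
    (hr : wt R x * (x 0 * V1 0 x + x 1 * V1 1 x) ≤ m) (hw3 : wt R x ^ 3 ≤ 4 * m) :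
    1 / 2 * (R ^ 2 * wt R x ^ 3) * ((p1 0 x ^ 2 + p1 1 x ^ 2) + τ * p x ^ 2)
      ≤ (-(p2 0 0 x + p2 1 1 x) + (V x - τ) * p x)
          * (wt R x * (x 0 * p1 0 x + x 1 * p1 1 x + p x / 2))
        + 9 / 4 * m * p x ^ 2
        - (mD R (fun x => V x - τ) p V1 p1 p2 0 x + mD R (fun x => V x - τ) p V1 p1 p2 1 x) := by
  have hid := multiplier_identity hR (W := fun x => V x - τ) (W1 := V1) hp x
  simp only at hid
  have hw := wt_pos hR x
  have hs : R ^ 2 * wt R x ^ 3 = wt R x - (x 0 ^ 2 + x 1 ^ 2) * wt R x ^ 3 := by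
    linear_combination wt R x * wt_sq hR x
  have h1 : wt R x ^ 3 * (x 0 * p1 0 x + x 1 * p1 1 x) ^ 2
      ≤ wt R x ^ 3 * ((x 0 ^ 2 + x 1 ^ 2) * (p1 0 x ^ 2 + p1 1 x ^ 2)) := by
    gcongr
    nlinarith [sq_nonneg (x 0 * p1 1 x - x 1 * p1 0 x)]
  have h2 : (3 / 4 * (x 0 ^ 2 + x 1 ^ 2) * wt R x ^ 5 - 1 / 2 * wt R x ^ 3) * p x ^ 2
      ≤ m * p x ^ 2 := by
    gcongr
    have : wt R x ^ 3 * (wt R x ^ 2 * R ^ 2 + wt R x ^ 2 * (x 0 ^ 2 + x 1 ^ 2)) = wt R x ^ 3 := by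
      linear_combination wt R x ^ 3 * wt_sq hR x
    have h3 : 0 ≤ wt R x ^ 3 * (wt R x ^ 2 * R ^ 2) := by positivity
    nlinarith
  have h4 : (wt R x * (x 0 * V1 0 x + x 1 * V1 1 x)) * p x ^ 2 ≤ m * p x ^ 2 := by gcongr
  have h5 : V x * (R ^ 2 * wt R x ^ 3) * p x ^ 2 ≤ 3 / 2 * m * p x ^ 2 := by
    refine mul_le_mul_of_nonneg_right (le_trans ?_ hV) (sq_nonneg _)
    gcongr
    exact le_abs_self _
  have h6 : 1 / 2 * (R ^ 2 * wt R x ^ 3) * (p1 0 x ^ 2 + p1 1 x ^ 2)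
      = 1 / 2 * (wt R x ^ 3 * (x 0 ^ 2 + x 1 ^ 2) + wt R x) * (p1 0 x ^ 2 + p1 1 x ^ 2)
        - wt R x ^ 3 * ((x 0 ^ 2 + x 1 ^ 2) * (p1 0 x ^ 2 + p1 1 x ^ 2)) := by
    rw [hs]; ring
  nlinarith

/-- The sum of `multiplier_lower` over the real part `p` and the imaginary part `q` of `u`, where
`A = |u|` and `B = |∇u|`; the hypothesis `hh` is the equation with right-hand side bounded by
`g + m |u|`. -/
lemma multiplier_pointwise {R : ℝ} (hR : 1 ≤ R) {V p q : Ed 2 → ℝ} {V1 p1 q1 : Fin 2 → Ed 2 → ℝ}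
    {p2 q2 : Fin 2 → Fin 2 → Ed 2 → ℝ} (hp : Jet p p1 p2) (hq : Jet q q1 q2) (x : Ed 2)
    {τ ε m g A B : ℝ} (hA0 : 0 ≤ A) (hB0 : 0 ≤ B) (hm : 0 ≤ m) (hg : 0 ≤ g)
    (hA : A ^ 2 = p x ^ 2 + q x ^ 2)
    (hB : B ^ 2 = (p1 0 x ^ 2 + p1 1 x ^ 2) + (q1 0 x ^ 2 + q1 1 x ^ 2))
    (hV : |V x| * (R ^ 2 * wt R x ^ 3) ≤ 3 / 2 * m)
    (hr : wt R x * (x 0 * V1 0 x + x 1 * V1 1 x) ≤ m) (hw3 : wt R x ^ 3 ≤ 4 * m)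
    (hh : (-(p2 0 0 x + p2 1 1 x) + (V x - τ) * p x - ε * q x) ^ 2
      + (-(q2 0 0 x + q2 1 1 x) + (V x - τ) * q x + ε * p x) ^ 2 ≤ (g + m * A) ^ 2) :
    1 / 2 * (R ^ 2 * wt R x ^ 3) * (B ^ 2 + τ * A ^ 2)
      ≤ 3 * (m * A ^ 2) + m * (A * B) + g * (A + B) + |ε| * (A * B)
        + (-(mD R (fun x => V x - τ) p V1 p1 p2 0 x + mD R (fun x => V x - τ) q V1 q1 q2 0 x)
          + -(mD R (fun x => V x - τ) p V1 p1 p2 1 x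
            + mD R (fun x => V x - τ) q V1 q1 q2 1 x)) := by
  have hP := multiplier_lower hR (V := V) (V1 := V1) (τ := τ) hp x hV hr hw3
  have hQ := multiplier_lower hR (V := V) (V1 := V1) (τ := τ) hq x hV hr hw3
  set a1 := -(p2 0 0 x + p2 1 1 x) + (V x - τ) * p x with ha1
  set b1 := -(q2 0 0 x + q2 1 1 x) + (V x - τ) * q x with hb1
  set Xp := wt R x * (x 0 * p1 0 x + x 1 * p1 1 x) with hXp
  set Xq := wt R x * (x 0 * q1 0 x + x 1 * q1 1 x) with hXq
  have hXB : Xp ^ 2 + Xq ^ 2 ≤ B ^ 2 := by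
    rw [hB]
    exact add_le_add (wt_mul_radial_sq_le hR x _ _) (wt_mul_radial_sq_le hR x _ _)
  have hgm : 0 ≤ g + m * A := by positivity
  have e1 := inner_le_of_sq hgm hB0 hh hXB
  have e2 := inner_le_of_sq hgm hA0 hh hA.ge
  have e3 : ε * (q x * Xp - p x * Xq) ≤ |ε| * (A * B) := by
    have h1 : q x * Xp + (-p x) * Xq ≤ A * B :=
      inner_le_of_sq hA0 hB0 (le_of_eq (by rw [hA]; ring)) hXB
    have h2 : (-q x) * Xp + (p x) * Xq ≤ A * B :=
      inner_le_of_sq hA0 hB0 (le_of_eq (by rw [hA]; ring)) hXB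
    refine (le_abs_self _).trans ?_
    rw [abs_mul]
    gcongr
    rw [abs_le]
    constructor <;> linarith
  have hw1 := wt_le_one hR x
  have hw0 := wt_pos hR x
  have e4 : wt R x / 2 * ((a1 - ε * q x) * p x + (b1 + ε * p x) * q x)
      ≤ 1 / 2 * ((g + m * A) * A) := by
    refine (mul_le_mul_of_nonneg_left e2 (by positivity)).trans ?_
    gcongr
  have e5 : a1 * (wt R x * (x 0 * p1 0 x + x 1 * p1 1 x + p x / 2))
      + b1 * (wt R x * (x 0 * q1 0 x + x 1 * q1 1 x + q x / 2))
      = ((a1 - ε * q x) * Xp + (b1 + ε * p x) * Xq) + ε * (q x * Xp - p x * Xq)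
        + wt R x / 2 * ((a1 - ε * q x) * p x + (b1 + ε * p x) * q x) := by
    rw [hXp, hXq]; ring
  have e6 : 0 ≤ g * A := by positivity
  have e7 : 0 ≤ m * A ^ 2 := by positivity
  have e8 : m * p x ^ 2 + m * q x ^ 2 = m * A ^ 2 := by rw [hA]; ring
  have e9 : 1 / 2 * (R ^ 2 * wt R x ^ 3) * (B ^ 2 + τ * A ^ 2)
     = 1 / 2 * (R ^ 2 * wt R x ^ 3) * ((p1 0 x ^ 2 + p1 1 x ^ 2) + τ * p x ^ 2)
      + 1 / 2 * (R ^ 2 * wt R x ^ 3) * ((q1 0 x ^ 2 + q1 1 x ^ 2) + τ * q x ^ 2) := by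
    rw [hA, hB]; ring
  linarith

/-- The flux is dominated by `|∇p|² + p²`, hence integrable for `p` in `H¹`. -/
lemma abs_mF_le {R : ℝ} (hR : 1 ≤ R) {W p : Ed 2 → ℝ} {p1 : Fin 2 → Ed 2 → ℝ} {K : ℝ}
    (hW : ∀ x, |W x| ≤ K) (i : Fin 2) (x : Ed 2) :
    |mF R W p p1 i x| ≤ (4 + K) * ((p1 0 x ^ 2 + p1 1 x ^ 2) + p x ^ 2) := by
  have hw := wt_pos hR x
  have hw1 := wt_le_one hR x
  have hK : 0 ≤ K := (abs_nonneg _).trans (hW x)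
  have hy : |wt R x * x i| ≤ 1 := by
    have h := wt_mul_radial_sq_le hR x (if i = 0 then 1 else 0) (if i = 0 then 0 else 1)
    refine abs_le_of_sq_le_sq ?_ zero_le_one
    fin_cases i <;> simpa using h
  have hpi : p1 i x ^ 2 ≤ p1 0 x ^ 2 + p1 1 x ^ 2 := by
    fin_cases i <;> simp <;> positivity
  set N := p1 0 x ^ 2 + p1 1 x ^ 2 with hN
  set X := wt R x * (x 0 * p1 0 x + x 1 * p1 1 x) with hX
  have hXN : X ^ 2 ≤ N := wt_mul_radial_sq_le hR x _ _
  have a1 : |p1 i x * X| ≤ N := by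
    rw [abs_le]; constructor <;> nlinarith [sq_nonneg (p1 i x - X), sq_nonneg (p1 i x + X)]
  have a2 : |wt R x * x i * N| ≤ N := by
    rw [abs_mul, abs_of_nonneg (by positivity : 0 ≤ N)]
    exact mul_le_of_le_one_left (by positivity) hy
  have a3 : |wt R x * (p x * p1 i x)| ≤ N + p x ^ 2 := by
    rw [abs_mul, abs_of_pos hw]
    refine (mul_le_of_le_one_left (abs_nonneg _) hw1).trans ?_
    rw [abs_le]
    constructor <;> nlinarith [sq_nonneg (p1 i x - p x), sq_nonneg (p1 i x + p x)]
  have a4 : |wt R x * x i * (wt R x ^ 2 * p x ^ 2)| ≤ p x ^ 2 := by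
    rw [abs_mul, abs_of_nonneg (by positivity : 0 ≤ wt R x ^ 2 * p x ^ 2)]
    refine (mul_le_of_le_one_left (by positivity) hy).trans ?_
    exact mul_le_of_le_one_left (by positivity) (pow_le_one₀ hw.le hw1)
  have a5 : |W x * (wt R x * x i) * p x ^ 2| ≤ K * p x ^ 2 := by
    rw [abs_mul, abs_mul, abs_of_nonneg (sq_nonneg (p x))]
    gcongr
    calc |W x| * |wt R x * x i| ≤ K * 1 := by gcongr; exact hW x
      _ = K := mul_one K
  have e : mF R W p p1 i x = -(p1 i x * X) + 1 / 2 * (wt R x * x i * N)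
      - 1 / 2 * (wt R x * (p x * p1 i x)) - 1 / 4 * (wt R x * x i * (wt R x ^ 2 * p x ^ 2))
      + 1 / 2 * (W x * (wt R x * x i) * p x ^ 2) := by
    rw [hX, hN]; unfold mF; ring
  have hN0 : 0 ≤ N := by positivity
  have hKN : 0 ≤ K * N := by positivity
  have hKp : 0 ≤ K * p x ^ 2 := by positivity
  have hp0 := sq_nonneg (p x)
  rw [e]
  rw [abs_le] at *
  constructor <;> linarith [a1.1, a1.2, a2.1, a2.2, a3.1, a3.2, a4.1, a4.2, a5.1, a5.2]

/-! ### Mass, energy and Morawetz estimates -/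

/-- The Euclidean length `|∇u|` of the gradient. -/
def gn (u : Ed 2 → ℂ) (x : Ed 2) : ℝ := √(‖pd u 0 x‖ ^ 2 + ‖pd u 1 x‖ ^ 2)

/-- The short-range profile `a (1 + |x|)^{-γ-1}`. -/
def mm (a γ : ℝ) (x : Ed 2) : ℝ := a * (1 + ‖x‖) ^ (-γ - 1)

/-- The hypotheses on `u` after the short-range potential and the source have been merged:
`h = -Δu + (V - τ) u + iεu` satisfies `|h| ≤ g + a (1 + |x|)^{-γ-1} |u|` with a continuous
`g ≥ 0`. -/
structure Sys (a γ τ ε : ℝ) (V : Ed 2 → ℝ) (u : Ed 2 → ℂ) (g : Ed 2 → ℝ) : Prop where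
  ha : 1 ≤ a
  hγ : 0 < γ
  hγ1 : γ ≤ 1
  hτ : 0 ≤ τ
  hu : ContDiff ℝ 2 u
  hV : ContDiff ℝ 1 V
  hVb : ∀ x, |V x| ≤ a * (1 + ‖x‖) ^ (-γ)
  hVr : ∀ x, radialDeriv V x ≤ mm a γ x
  hg : Continuous g
  hg0 : ∀ x, 0 ≤ g x
  hh : ∀ x, ‖-lap u x + ((V x - τ : ℝ) : ℂ) * u x + (ε : ℂ) * Complex.I * u x‖
    ≤ g x + mm a γ x * ‖u x‖
  hu2 : Integrable (fun x => ‖u x‖ ^ 2)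
  hgrad2 : Integrable (fun x => gn u x ^ 2)

lemma mm_nonneg {a γ : ℝ} (ha : 0 ≤ a) (x : Ed 2) : 0 ≤ mm a γ x := by
  unfold mm; positivity

lemma continuous_mm (a γ : ℝ) : Continuous (mm a γ) := by
  unfold mm
  refine continuous_const.mul (Continuous.rpow_const (by fun_prop) fun x => Or.inl ?_)
  positivity

lemma gn_nonneg (u : Ed 2 → ℂ) (x : Ed 2) : 0 ≤ gn u x := Real.sqrt_nonneg _

lemma gn_sq (u : Ed 2 → ℂ) (x : Ed 2) : gn u x ^ 2 = ‖pd u 0 x‖ ^ 2 + ‖pd u 1 x‖ ^ 2 :=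
  Real.sq_sqrt (by positivity)

lemma continuous_pd {u : Ed 2 → ℂ} (hu : ContDiff ℝ 2 u) (i : Fin 2) : Continuous (pd u i) := by
  have := hu.continuous_fderiv (by norm_num)
  unfold pd
  fun_prop

lemma continuous_gn {u : Ed 2 → ℂ} (hu : ContDiff ℝ 2 u) : Continuous (gn u) := by
  have h0 := continuous_pd hu 0
  have h1 := continuous_pd hu 1
  unfold gn
  fun_prop

lemma norm_sq_re_im (z : ℂ) : ‖z‖ ^ 2 = z.re ^ 2 + z.im ^ 2 := by
  rw [Complex.sq_norm, Complex.normSq_apply]; ring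

lemma norm_sq_coord (x : Ed 2) : ‖x‖ ^ 2 = x 0 ^ 2 + x 1 ^ 2 := by
  rw [EuclideanSpace.norm_sq_eq]; simp [Fin.sum_univ_two]

namespace Sys

variable {a γ τ ε : ℝ} {V : Ed 2 → ℝ} {u : Ed 2 → ℂ} {g : Ed 2 → ℝ}

lemma jet_re (S : Sys a γ τ ε V u g) : Jet (fun x => (u x).re) (fun i x => (pd u i x).re)
    (fun i j x => (fderiv ℝ (pd u j) x (dir i)).re) := Jet.of_contDiff S.hu Complex.reCLM

lemma jet_im (S : Sys a γ τ ε V u g) : Jet (fun x => (u x).im) (fun i x => (pd u i x).im)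
    (fun i j x => (fderiv ℝ (pd u j) x (dir i)).im) := Jet.of_contDiff S.hu Complex.imCLM

lemma gn_sq_re_im (u : Ed 2 → ℂ) (x : Ed 2) : gn u x ^ 2 =
    ((pd u 0 x).re ^ 2 + (pd u 1 x).re ^ 2) + ((pd u 0 x).im ^ 2 + (pd u 1 x).im ^ 2) := by
  rw [gn_sq, norm_sq_re_im, norm_sq_re_im]; ring

lemma hh_sq (S : Sys a γ τ ε V u g) (x : Ed 2) :
    (-((fderiv ℝ (pd u 0) x (dir 0)).re + (fderiv ℝ (pd u 1) x (dir 1)).re)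
        + (V x - τ) * (u x).re - ε * (u x).im) ^ 2
      + (-((fderiv ℝ (pd u 0) x (dir 0)).im + (fderiv ℝ (pd u 1) x (dir 1)).im)
        + (V x - τ) * (u x).im + ε * (u x).re) ^ 2 ≤ (g x + mm a γ x * ‖u x‖) ^ 2 := by
  have h := pow_le_pow_left₀ (norm_nonneg _) (S.hh x) 2
  rw [norm_sq_re_im] at h
  refine le_trans (le_of_eq ?_) h
  simp [lap, Fin.sum_univ_two]
  ring

lemma V_le (S : Sys a γ τ ε V u g) (x : Ed 2) : |V x| ≤ a := by
  refine (S.hVb x).trans (mul_le_of_le_one_right (by linarith [S.ha]) ?_)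
  exact Real.rpow_le_one_of_one_le_of_nonpos (by linarith [norm_nonneg x]) (by linarith [S.hγ])

lemma integrable_of_le (S : Sys a γ τ ε V u g) {F : Ed 2 → ℝ} (hF : Continuous F) (K : ℝ)
    (h : ∀ x, |F x| ≤ K * (gn u x ^ 2 + ‖u x‖ ^ 2)) : Integrable F :=
  ((S.hgrad2.add S.hu2).const_mul K).mono' hF.aestronglyMeasurable
    (Filter.Eventually.of_forall h)

lemma pd_re_sq_le (u : Ed 2 → ℂ) (i : Fin 2) (x : Ed 2) :
    (pd u i x).re ^ 2 + (pd u i x).im ^ 2 ≤ gn u x ^ 2 := by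
  rw [gn_sq_re_im]
  fin_cases i <;> simp <;> nlinarith [sq_nonneg (pd u 0 x).re, sq_nonneg (pd u 1 x).re,
    sq_nonneg (pd u 0 x).im, sq_nonneg (pd u 1 x).im]

/-- The mass estimate: the imaginary part of the equation tested with `ū`. -/
lemma eps_mass (S : Sys a γ τ ε V u g) :
    ∫⁻ x, ENNReal.ofReal (|ε| * ‖u x‖ ^ 2)
      ≤ ∫⁻ x, ENNReal.ofReal (g x * ‖u x‖ + mm a γ x * ‖u x‖ ^ 2) := by
  have hp := S.jet_re
  have hq := S.jet_im
  obtain ⟨s, hs1, hs⟩ : ∃ s : ℝ, |s| = 1 ∧ s * ε = |ε| := by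
    rcases le_total 0 ε with h | h
    · exact ⟨1, by simp, by rw [abs_of_nonneg h]; ring⟩
    · exact ⟨-1, by simp, by rw [abs_of_nonpos h]; ring⟩
  have cp := hp.c0
  have cq := hq.c0
  have cp1 := hp.c1
  have cq1 := hq.c1
  have cp2 := hp.c2
  have cq2 := hq.c2
  have cg := S.hg
  have cm := continuous_mm a γ
  have cu := S.hu.continuous
  have hm := fun x => mm_nonneg (a := a) (γ := γ) (by linarith [S.ha]) x
  refine lintegral_le_of_le_add_div (v := dir)
    (F := fun i x => s * ((u x).re * (pd u i x).im - (u x).im * (pd u i x).re))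
    (D := fun i x => s * ((u x).re * (fderiv ℝ (pd u i) x (dir i)).im
      - (u x).im * (fderiv ℝ (pd u i) x (dir i)).re))
    (fun i => ?_) (fun i => ?_) (fun i x => ?_) (fun i => ?_) ?_ ?_ (fun x => ?_) (fun x => ?_)
    (fun x => ?_)
  · exact continuous_const.mul ((cp.mul (cq1 i)).sub (cq.mul (cp1 i)))
  · exact continuous_const.mul ((cp.mul (cq2 i i)).sub (cq.mul (cp2 i i)))
  · have d1 : HasDerivAt (fun t : ℝ => (u (x + t • dir i)).re) _ 0 := hp.d1 i x
    have d2 : HasDerivAt (fun t : ℝ => (u (x + t • dir i)).im) _ 0 := hq.d1 i x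
    have d3 : HasDerivAt (fun t : ℝ => (pd u i (x + t • dir i)).re) _ 0 := hp.d2 i i x
    have d4 : HasDerivAt (fun t : ℝ => (pd u i (x + t • dir i)).im) _ 0 := hq.d2 i i x
    refine HasDerivAt.congr_deriv (((d1.fun_mul d4).fun_sub (d2.fun_mul d3)).const_mul s) ?_
    simp only [zero_smul, add_zero]
    ring
  · refine S.integrable_of_le
      (continuous_const.mul ((cp.mul (cq1 i)).sub (cq.mul (cp1 i)))) 1 fun x => ?_
    rw [abs_mul, hs1, norm_sq_re_im, one_mul, one_mul]
    have h := pd_re_sq_le u i x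
    rw [abs_le]
    constructor <;> nlinarith [sq_nonneg ((u x).re - (pd u i x).im),
      sq_nonneg ((u x).re + (pd u i x).im), sq_nonneg ((u x).im - (pd u i x).re),
      sq_nonneg ((u x).im + (pd u i x).re)]
  · fun_prop
  · fun_prop
  · positivity
  · have := S.hg0 x
    have := hm x
    positivity
  · have h := S.hh_sq x
    have hgm : 0 ≤ g x + mm a γ x * ‖u x‖ := by
      have := S.hg0 x
      have := hm x
      positivity
    have hss : s ^ 2 = 1 := by rw [← sq_abs, hs1]; norm_num
    have e1 := inner_le_of_sq (z := -s * (u x).im) (t := s * (u x).re) hgm (norm_nonneg (u x)) h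
      (by
        rw [norm_sq_re_im]
        have : (-s * (u x).im) ^ 2 + (s * (u x).re) ^ 2
          = s ^ 2 * ((u x).re ^ 2 + (u x).im ^ 2) := by ring
        rw [this, hss, one_mul])
    have e2 := norm_sq_re_im (u x)
    have e3 : |ε| * ‖u x‖ ^ 2 = s * ε * ((u x).re ^ 2 + (u x).im ^ 2) := by rw [hs, e2]
    rw [e3]
    linarith

/-- The energy estimate: the real part of the equation tested with `ū`. -/
lemma energy (S : Sys a γ τ ε V u g) :
    ∫⁻ x, ENNReal.ofReal (gn u x ^ 2)
      ≤ ∫⁻ x, ENNReal.ofReal ((τ + a) * ‖u x‖ ^ 2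
        + (g x * ‖u x‖ + mm a γ x * ‖u x‖ ^ 2)) := by
  have hp := S.jet_re
  have hq := S.jet_im
  have cp := hp.c0
  have cq := hq.c0
  have cp1 := hp.c1
  have cq1 := hq.c1
  have cp2 := hp.c2
  have cq2 := hq.c2
  have cg := S.hg
  have cm := continuous_mm a γ
  have cu := S.hu.continuous
  have cgn := continuous_gn S.hu
  have ha := S.ha
  have hτ := S.hτ
  have hm := fun x => mm_nonneg (a := a) (γ := γ) (by linarith [S.ha]) x
  refine lintegral_le_of_le_add_div (v := dir)
    (F := fun i x => (u x).re * (pd u i x).re + (u x).im * (pd u i x).im)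
    (D := fun i x => ((pd u i x).re ^ 2 + (u x).re * (fderiv ℝ (pd u i) x (dir i)).re)
      + ((pd u i x).im ^ 2 + (u x).im * (fderiv ℝ (pd u i) x (dir i)).im))
    (fun i => ?_) (fun i => ?_) (fun i x => ?_) (fun i => ?_) ?_ ?_ (fun x => ?_) (fun x => ?_)
    (fun x => ?_)
  · exact (cp.mul (cp1 i)).add (cq.mul (cq1 i))
  · exact (((cp1 i).pow 2).add (cp.mul (cp2 i i))).add (((cq1 i).pow 2).add (cq.mul (cq2 i i)))
  · have d1 : HasDerivAt (fun t : ℝ => (u (x + t • dir i)).re) _ 0 := hp.d1 i x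
    have d2 : HasDerivAt (fun t : ℝ => (u (x + t • dir i)).im) _ 0 := hq.d1 i x
    have d3 : HasDerivAt (fun t : ℝ => (pd u i (x + t • dir i)).re) _ 0 := hp.d2 i i x
    have d4 : HasDerivAt (fun t : ℝ => (pd u i (x + t • dir i)).im) _ 0 := hq.d2 i i x
    refine HasDerivAt.congr_deriv ((d1.fun_mul d3).fun_add (d2.fun_mul d4)) ?_
    simp only [zero_smul, add_zero]
    ring
  · refine S.integrable_of_le ((cp.mul (cp1 i)).add (cq.mul (cq1 i))) 1 fun x => ?_
    rw [norm_sq_re_im]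
    have h := pd_re_sq_le u i x
    rw [abs_le]
    constructor <;> nlinarith [sq_nonneg ((u x).re - (pd u i x).re),
      sq_nonneg ((u x).re + (pd u i x).re), sq_nonneg ((u x).im - (pd u i x).im),
      sq_nonneg ((u x).im + (pd u i x).im)]
  · fun_prop
  · fun_prop
  · positivity
  · have := S.hg0 x
    have := hm x
    positivity
  · have h := S.hh_sq x
    have hgm : 0 ≤ g x + mm a γ x * ‖u x‖ := by
      have := S.hg0 x
      have := hm x
      positivity
    have e2 := norm_sq_re_im (u x)
    have e1 := inner_le_of_sq (z := (u x).re) (t := (u x).im) hgm (norm_nonneg (u x)) h e2.ge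
    have e4 : (τ - V x) * ‖u x‖ ^ 2 ≤ (τ + a) * ‖u x‖ ^ 2 := by
      gcongr
      linarith [neg_abs_le (V x), S.V_le x]
    rw [gn_sq_re_im]
    have e5 : (g x + mm a γ x * ‖u x‖) * ‖u x‖
        = g x * ‖u x‖ + mm a γ x * ((u x).re ^ 2 + (u x).im ^ 2) := by rw [← e2]; ring
    rw [e5] at e1
    rw [e2] at e4 ⊢
    linarith

/-- The Morawetz estimate at scale `R`, before the right-hand side is estimated. -/
lemma morawetz (S : Sys a γ τ ε V u g) {R : ℝ} (hR : 1 ≤ R) :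
    ∫⁻ x, ENNReal.ofReal (1 / 2 * (R ^ 2 * wt R x ^ 3) * (gn u x ^ 2 + τ * ‖u x‖ ^ 2))
      ≤ ∫⁻ x, ENNReal.ofReal (3 * (mm a γ x * ‖u x‖ ^ 2) + mm a γ x * (‖u x‖ * gn u x)
        + g x * (‖u x‖ + gn u x) + |ε| * (‖u x‖ * gn u x)) := by
  have hp := S.jet_re
  have hq := S.jet_im
  have cg := S.hg
  have cm := continuous_mm a γ
  have cu := S.hu.continuous
  have cgn := continuous_gn S.hu
  have cV := S.hV.continuous
  have cw := continuous_wt hR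
  have ha := S.ha
  have hτ := S.hτ
  have hm := fun x => mm_nonneg (a := a) (γ := γ) (by linarith [S.ha]) x
  set V1 : Fin 2 → Ed 2 → ℝ := fun i x => fderiv ℝ V x (dir i) with hV1
  have cV1 : ∀ i, Continuous (V1 i) := by
    intro i
    have := S.hV.continuous_fderiv (by norm_num)
    rw [hV1]
    fun_prop
  have cW : Continuous (fun x => V x - τ) := by fun_prop
  have dW : ∀ i x, HasLineDerivAt ℝ (fun x => V x - τ) (V1 i x) x (dir i) := by
    intro i x
    have h1 : HasDerivAt (fun t : ℝ => V (x + t • dir i)) (V1 i x) 0 :=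
      (S.hV.differentiable (by norm_num) x).hasFDerivAt.hasLineDerivAt (dir i)
    exact h1.sub_const τ
  have hWb : ∀ x, |V x - τ| ≤ a + τ := fun x => by
    refine (abs_sub _ _).trans ?_
    rw [abs_of_nonneg hτ]
    linarith [S.V_le x]
  have cF : ∀ i, Continuous (fun x => -(mF R (fun x => V x - τ) (fun x => (u x).re)
      (fun i x => (pd u i x).re) i x + mF R (fun x => V x - τ) (fun x => (u x).im)
      (fun i x => (pd u i x).im) i x)) := fun i =>
    ((continuous_mF hR hp cW i).add (continuous_mF hR hq cW i)).neg
  refine lintegral_le_of_le_add_div (v := dir)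
    (F := fun i x => -(mF R (fun x => V x - τ) (fun x => (u x).re)
      (fun i x => (pd u i x).re) i x + mF R (fun x => V x - τ) (fun x => (u x).im)
      (fun i x => (pd u i x).im) i x))
    (D := fun i x => -(mD R (fun x => V x - τ) (fun x => (u x).re) V1
      (fun i x => (pd u i x).re) (fun i j x => (fderiv ℝ (pd u j) x (dir i)).re) i x
      + mD R (fun x => V x - τ) (fun x => (u x).im) V1
      (fun i x => (pd u i x).im) (fun i j x => (fderiv ℝ (pd u j) x (dir i)).im) i x))
    cF (fun i => ?_) (fun i x => ?_) (fun i => ?_) ?_ ?_ (fun x => ?_) (fun x => ?_)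
    (fun x => ?_)
  · exact ((continuous_mD hR hp cW cV1 i).add (continuous_mD hR hq cW cV1 i)).neg
  · have h1 := hasLineDerivAt_mF hR hp dW i x
    have h2 := hasLineDerivAt_mF hR hq dW i x
    unfold HasLineDerivAt at h1 h2
    exact (h1.fun_add h2).fun_neg
  · refine S.integrable_of_le (cF i) (4 + (a + τ)) fun x => ?_
    rw [abs_neg]
    refine (abs_add_le _ _).trans ?_
    refine (add_le_add (abs_mF_le hR hWb i x) (abs_mF_le hR hWb i x)).trans (le_of_eq ?_)
    rw [gn_sq_re_im, norm_sq_re_im]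
    ring
  · fun_prop
  · fun_prop
  · have := wt_pos hR x
    positivity
  · have := S.hg0 x
    have := hm x
    have := gn_nonneg u x
    positivity
  · have hw0 := wt_pos hR x
    have hws := wt_sq hR x
    have hn := norm_nonneg x
    have hns := norm_sq_coord x
    rw [← hns] at hws
    have h1 : wt R x * (1 + ‖x‖) ≤ 3 / 2 := by
      refine le_of_sq_le_sq ?_ (by norm_num)
      have : wt R x ^ 2 * (1 + ‖x‖ ^ 2) ≤ wt R x ^ 2 * (R ^ 2 + ‖x‖ ^ 2) := by
        gcongr
        nlinarith
      nlinarith [mul_nonneg (sq_nonneg (wt R x)) (sq_nonneg (1 - ‖x‖))]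
    have hpos : 0 < 1 + ‖x‖ := by positivity
    have h2 : wt R x ≤ 3 / 2 / (1 + ‖x‖) := by rwa [le_div_iff₀ hpos]
    have hmx : mm a γ x = a * (1 + ‖x‖) ^ (-γ) * (1 / (1 + ‖x‖)) := by
      unfold mm
      rw [Real.rpow_sub hpos, Real.rpow_one]
      ring
    refine multiplier_pointwise hR hp hq x (norm_nonneg _) (gn_nonneg u x) (hm x) (S.hg0 x)
      (norm_sq_re_im _) (gn_sq_re_im u x) ?_ ?_ ?_ (S.hh_sq x)
    · have h3 : R ^ 2 * wt R x ^ 3 ≤ wt R x := by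
        have : R ^ 2 * wt R x ^ 2 ≤ 1 := by nlinarith [mul_nonneg (sq_nonneg (wt R x)) (sq_nonneg ‖x‖)]
        calc R ^ 2 * wt R x ^ 3 = (R ^ 2 * wt R x ^ 2) * wt R x := by ring
          _ ≤ 1 * wt R x := by gcongr
          _ = _ := one_mul _
      calc |V x| * (R ^ 2 * wt R x ^ 3)
          ≤ (a * (1 + ‖x‖) ^ (-γ)) * (3 / 2 / (1 + ‖x‖)) := by
            gcongr
            · exact S.hVb x
            · exact h3.trans h2
        _ = 3 / 2 * mm a γ x := by rw [hmx]; ring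
    · have h4 : x 0 * V1 0 x + x 1 * V1 1 x = ‖x‖ * radialDeriv V x := by
        have hx : x = x 0 • dir 0 + x 1 • dir 1 := by
          ext i; fin_cases i <;> simp [dir]
        have h5 : fderiv ℝ V x x = x 0 * V1 0 x + x 1 * V1 1 x := by
          have h6 := congrArg (fderiv ℝ V x) hx
          rwa [map_add, map_smul, map_smul] at h6
        rw [← h5]
        unfold radialDeriv
        by_cases h0 : x = 0
        · subst h0; simp
        · have : ‖x‖ ≠ 0 := norm_ne_zero_iff.2 h0
          field_simp
      rw [h4, ← mul_assoc]
      have h6 : wt R x * ‖x‖ ≤ 1 := by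
        refine le_of_sq_le_sq ?_ zero_le_one
        nlinarith [mul_nonneg (sq_nonneg (wt R x)) (sq_nonneg R)]
      calc wt R x * ‖x‖ * radialDeriv V x ≤ wt R x * ‖x‖ * mm a γ x := by
            gcongr
            exact S.hVr x
        _ ≤ 1 * mm a γ x := by
            gcongr
            exact hm x
        _ = _ := one_mul _
    · have h7 : (1 + ‖x‖) ^ (-3 : ℝ) ≤ (1 + ‖x‖) ^ (-γ - 1) :=
        Real.rpow_le_rpow_of_exponent_le (by linarith) (by linarith [S.hγ1])
      have h8 : (1 + ‖x‖) ^ (-3 : ℝ) = 1 / (1 + ‖x‖) ^ 3 := by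
        rw [Real.rpow_neg hpos.le]; norm_num
      calc wt R x ^ 3 ≤ (3 / 2 / (1 + ‖x‖)) ^ 3 := by gcongr
        _ = 27 / 8 * (1 / (1 + ‖x‖) ^ 3) := by rw [div_pow]; norm_num; rfl
        _ ≤ 4 * (1 / (1 + ‖x‖) ^ 3) := by gcongr; norm_num
        _ ≤ 4 * (1 * (1 + ‖x‖) ^ (-γ - 1)) := by rw [one_mul, ← h8]; gcongr
        _ ≤ 4 * mm a γ x := by
            unfold mm
            gcongr

end Sys

/-! ### Morrey–Campanato norms: weights and duality -/

lemma setLIntegral_ball_le {G : Ed 2 → ℝ≥0∞} {R : ℝ} (hR : 1 ≤ R) :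
    ∫⁻ x in ball (0 : Ed 2) R, G x ≤ ENNReal.ofReal R * nX2r 1 G := by
  have h : (ENNReal.ofReal R)⁻¹ * ∫⁻ x in ball (0 : Ed 2) R, G x ≤ nX2r 1 G :=
    le_iSup₂ (f := fun (R : ℝ) (_ : 1 ≤ R) =>
      (ENNReal.ofReal R)⁻¹ * ∫⁻ x in ball (0 : Ed 2) R, G x) R hR
  have h0 : ENNReal.ofReal R ≠ 0 := by
    rw [ne_eq, ENNReal.ofReal_eq_zero]; linarith
  calc ∫⁻ x in ball (0 : Ed 2) R, G x
      = ENNReal.ofReal R * ((ENNReal.ofReal R)⁻¹ * ∫⁻ x in ball (0 : Ed 2) R, G x) := by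
        rw [← mul_assoc, ENNReal.mul_inv_cancel h0 ENNReal.ofReal_ne_top, one_mul]
    _ ≤ _ := by gcongr

lemma nX2r_le_lintegral (G : Ed 2 → ℝ≥0∞) : nX2r 1 G ≤ ∫⁻ x, G x := by
  refine iSup₂_le fun R hR => ?_
  have h1 : (ENNReal.ofReal R)⁻¹ ≤ 1 := by
    rw [ENNReal.inv_le_one]
    exact ENNReal.one_le_ofReal.2 hR
  calc (ENNReal.ofReal R)⁻¹ * ∫⁻ x in ball (0 : Ed 2) R, G x
      ≤ 1 * ∫⁻ x, G x := by gcongr; exact Measure.restrict_le_self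
    _ = _ := one_mul _

/-- The weight `a (1 + |x|)^{-γ-1}` is integrable against the Morrey–Campanato norm: sum over
dyadic balls. -/
lemma weighted_le {a γ : ℝ} (ha : 0 ≤ a) (hγ : 0 < γ) :
    ∃ K : ℝ, 0 < K ∧ ∀ G : Ed 2 → ℝ≥0∞, Measurable G →
      ∫⁻ x, ENNReal.ofReal (mm a γ x) * G x ≤ ENNReal.ofReal K * nX2r 1 G := by
  set q : ℝ := 2 ^ (-γ) with hq
  have hq0 : 0 < q := by positivity
  have hq1 : q < 1 := Real.rpow_lt_one_of_one_lt_of_neg one_lt_two (by linarith)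
  have hsum : Summable (fun k : ℕ => 2 * a * q ^ k) :=
    (summable_geometric_of_lt_one hq0.le hq1).mul_left _
  have hnn : ∀ k : ℕ, 0 ≤ 2 * a * q ^ k := fun k => by positivity
  refine ⟨(∑' k : ℕ, 2 * a * q ^ k) + 1, by
    have h : 0 ≤ ∑' k : ℕ, 2 * a * q ^ k := tsum_nonneg hnn
    linarith, fun G hG => ?_⟩
  let c : ℕ → ℝ≥0∞ := fun k => ENNReal.ofReal (a * (q ^ k / 2 ^ k))
  let B : ℕ → Set (Ed 2) := fun k => ball 0 (2 ^ (k + 1))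
  have hpt : ∀ x, ENNReal.ofReal (mm a γ x) * G x ≤ ∑' k, c k * (B k).indicator G x := by
    intro x
    obtain ⟨k, hk1, hk2⟩ := exists_nat_pow_near (x := 1 + ‖x‖) (y := 2)
      (by linarith [norm_nonneg x]) one_lt_two
    refine le_trans ?_ (ENNReal.le_tsum k)
    have hx : x ∈ B k := by
      simp only [B, mem_ball_zero_iff]
      linarith
    rw [indicator_of_mem hx]
    gcongr
    refine ENNReal.ofReal_le_ofReal ?_
    unfold mm
    gcongr
    calc (1 + ‖x‖) ^ (-γ - 1) ≤ ((2 : ℝ) ^ k) ^ (-γ - 1) :=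
          Real.rpow_le_rpow_of_nonpos (by positivity) hk1 (by linarith)
      _ = q ^ k / 2 ^ k := by
          rw [Real.rpow_sub (by positivity), Real.rpow_one, hq, ← Real.rpow_natCast,
            ← Real.rpow_natCast, ← Real.rpow_mul (by norm_num), ← Real.rpow_mul (by norm_num),
            mul_comm]
  calc ∫⁻ x, ENNReal.ofReal (mm a γ x) * G x
      ≤ ∫⁻ x, ∑' k, c k * (B k).indicator G x := lintegral_mono hpt
    _ = ∑' k, ∫⁻ x, c k * (B k).indicator G x :=
        lintegral_tsum fun k => ((hG.indicator measurableSet_ball).const_mul _).aemeasurable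
    _ = ∑' k, c k * ∫⁻ x in B k, G x := by
        congr 1; ext k
        rw [lintegral_const_mul _ (hG.indicator measurableSet_ball),
          lintegral_indicator measurableSet_ball]
    _ ≤ ∑' k, ENNReal.ofReal (2 * a * q ^ k) * nX2r 1 G := by
        refine ENNReal.tsum_le_tsum fun k => ?_
        have h2 : (1 : ℝ) ≤ 2 ^ (k + 1) := one_le_pow₀ one_le_two
        refine (mul_le_mul_right (setLIntegral_ball_le h2) _).trans (le_of_eq ?_)
        rw [← mul_assoc, ← ENNReal.ofReal_mul (by positivity)]
        congr 2
        rw [pow_succ]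
        field_simp
    _ = ENNReal.ofReal (∑' k : ℕ, 2 * a * q ^ k) * nX2r 1 G := by
        rw [ENNReal.tsum_mul_right, ENNReal.ofReal_tsum_of_nonneg hnn hsum]
    _ ≤ _ := by
        gcongr
        linarith

lemma setLIntegral_mul_le_sqrt {g v : Ed 2 → ℝ≥0∞} (hg : Measurable g) (hv : Measurable v)
    (s : Set (Ed 2)) : ∫⁻ x in s, g x * v x
      ≤ (∫⁻ x in s, g x ^ 2) ^ (1 / 2 : ℝ) * (∫⁻ x in s, v x ^ 2) ^ (1 / 2 : ℝ) := by
  have h := ENNReal.lintegral_mul_le_Lp_mul_Lq (volume.restrict s)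
    (Real.HolderConjugate.two_two) hg.aemeasurable hv.aemeasurable
  simpa using h

/-- Cauchy–Schwarz on a set contained in `B(0,2ρ)`, where `∫ v²` is at most `2ρ` times the squared
`X` norm of `v`. -/
lemma shell_le {g v : Ed 2 → ℝ≥0∞} (hg : Measurable g) (hv : Measurable v) (s : Set (Ed 2))
    {ρ : ℝ} (hρ : 1 ≤ 2 * ρ) (hs : s ⊆ ball 0 (2 * ρ)) :
    ∫⁻ x in s, g x * v x ≤ (ENNReal.ofReal ρ * ∫⁻ x in s, g x ^ 2) ^ (1 / 2 : ℝ)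
      * (2 * nX2r 1 (fun x => v x ^ 2)) ^ (1 / 2 : ℝ) := by
  refine (setLIntegral_mul_le_sqrt hg hv s).trans ?_
  have h1 : ∫⁻ x in s, v x ^ 2 ≤ ENNReal.ofReal ρ * (2 * nX2r 1 (fun x => v x ^ 2)) := by
    refine (lintegral_mono_set hs).trans ((setLIntegral_ball_le hρ).trans (le_of_eq ?_))
    rw [ENNReal.ofReal_mul zero_le_two, ENNReal.ofReal_ofNat]
    ring
  have h12 : (0 : ℝ) ≤ 1 / 2 := by norm_num
  calc (∫⁻ x in s, g x ^ 2) ^ (1 / 2 : ℝ) * (∫⁻ x in s, v x ^ 2) ^ (1 / 2 : ℝ)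
      ≤ (∫⁻ x in s, g x ^ 2) ^ (1 / 2 : ℝ)
        * (ENNReal.ofReal ρ * (2 * nX2r 1 (fun x => v x ^ 2))) ^ (1 / 2 : ℝ) := by gcongr
    _ = _ := by
        rw [ENNReal.mul_rpow_of_nonneg _ _ h12, ENNReal.mul_rpow_of_nonneg (ENNReal.ofReal ρ) _ h12]
        ring

lemma jIdx_one : jIdx 1 = -1 := by simp [jIdx]

/-- Duality between the two norms: Cauchy–Schwarz on the unit ball and on each dyadic shell. -/
lemma duality {g v : Ed 2 → ℝ≥0∞} (hg : Measurable g) (hv : Measurable v) :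
    ∫⁻ x, g x * v x ≤ nXstarr 1 (fun x => g x ^ 2)
      * (2 * nX2r 1 (fun x => v x ^ 2)) ^ (1 / 2 : ℝ) := by
  have hcov : (⋃ j : {j : ℤ // jIdx 1 ≤ j}, shell 2 (j : ℤ)) ∪ ball 0 1 = univ := by
    refine eq_univ_of_forall fun x => ?_
    by_cases hx : ‖x‖ < 1
    · right; simpa using hx
    · left
      push Not at hx
      obtain ⟨n, hn1, hn2⟩ := exists_mem_Ioc_zpow (x := ‖x‖) (y := 2) (by linarith) one_lt_two
      have hn : jIdx 1 ≤ n := by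
        rw [jIdx_one]
        by_contra! hlt
        have : (2 : ℝ) ^ (n + 1) ≤ 2 ^ (-1 : ℤ) :=
          zpow_le_zpow_right₀ one_le_two (by omega)
        norm_num at this
        linarith
      exact mem_iUnion.2 ⟨⟨n, hn⟩, hn1, hn2⟩
  rw [← setLIntegral_univ, ← hcov]
  refine (lintegral_union_le _ _ _).trans ?_
  rw [nXstarr, add_mul, ← ENNReal.tsum_mul_right]
  refine add_le_add ((lintegral_iUnion_le _ _).trans (ENNReal.tsum_le_tsum fun j => ?_)) ?_
  · have hj : (1 : ℝ) ≤ 2 ^ ((j : ℤ) + 1) := by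
      have h : jIdx 1 ≤ (j : ℤ) := j.2
      have h1 := jIdx_one
      exact one_le_zpow₀ one_le_two (by omega)
    refine shell_le hg hv _ (by linarith) fun x hx => ?_
    have := hx.2
    rw [mem_ball_zero_iff]
    linarith
  · exact shell_le hg hv _ (by norm_num) (ball_subset_ball (by norm_num))

/-- On `B(0,R)` the Morawetz weight `R² w³` is at least `1 / (3R)`. -/
lemma ball_le_weight {R : ℝ} (hR : 1 ≤ R) (φ : Ed 2 → ℝ) (hφ0 : ∀ x, 0 ≤ φ x) :
    (ENNReal.ofReal R)⁻¹ * ∫⁻ x in ball (0 : Ed 2) R, ENNReal.ofReal (φ x)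
      ≤ 6 * ∫⁻ x, ENNReal.ofReal (1 / 2 * (R ^ 2 * wt R x ^ 3) * φ x) := by
  have hR0 : 0 < R := by linarith
  rw [← lintegral_const_mul' _ _ (by simpa using hR0), ← lintegral_const_mul' _ _ (by simp)]
  refine (lintegral_mono_ae ?_).trans (setLIntegral_le_lintegral (ball 0 R) _)
  filter_upwards [ae_restrict_mem measurableSet_ball] with x hx
  rw [mem_ball_zero_iff] at hx
  rw [← ENNReal.ofReal_inv_of_pos hR0, ← ENNReal.ofReal_mul (by positivity)]
  have h6 : (6 : ℝ≥0∞) = ENNReal.ofReal 6 := by simp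
  rw [h6, ← ENNReal.ofReal_mul (by norm_num)]
  refine ENNReal.ofReal_le_ofReal ?_
  rw [← mul_assoc, ← mul_assoc]
  refine mul_le_mul_of_nonneg_right ?_ (hφ0 x)
  have hw0 := wt_pos hR x
  have hws := wt_sq hR x
  rw [← norm_sq_coord x] at hws
  have h1 : (2 / 3 : ℝ) ≤ R * wt R x := by
    refine le_of_sq_le_sq ?_ (by positivity)
    have : wt R x ^ 2 * (R ^ 2 + ‖x‖ ^ 2) ≤ wt R x ^ 2 * (R ^ 2 + R ^ 2) := by gcongr
    nlinarith
  have h2 : (1 / 2 : ℝ) ≤ (R * wt R x) ^ 2 := by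
    have : wt R x ^ 2 * (R ^ 2 + ‖x‖ ^ 2) ≤ wt R x ^ 2 * (R ^ 2 + R ^ 2) := by gcongr
    nlinarith
  have h3 : (1 / 3 : ℝ) ≤ (R * wt R x) ^ 2 * (R * wt R x) := by
    calc (1 / 3 : ℝ) = 1 / 2 * (2 / 3) := by norm_num
      _ ≤ _ := by gcongr
  rw [inv_le_iff_one_le_mul₀ hR0]
  linarith

/-! ### The sphere term -/

/-- The point of the plane with polar coordinates `(r, θ)`. -/
def pol (r θ : ℝ) : Ed 2 := !₂[r * Real.cos θ, r * Real.sin θ]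

lemma pol_eq_smul (r θ : ℝ) : pol r θ = r • pol 1 θ := by
  ext i; fin_cases i <;> simp [pol]

lemma pol_one_eq (θ : ℝ) : pol 1 θ = Real.cos θ • EuclideanSpace.single (0 : Fin 2) (1 : ℝ)
    + Real.sin θ • EuclideanSpace.single (1 : Fin 2) (1 : ℝ) := by
  ext i; fin_cases i <;> simp [pol]

lemma continuous_pol : Continuous (fun p : ℝ × ℝ => pol p.1 p.2) := by
  unfold pol
  refine (PiLp.continuous_toLp 2 _).comp (continuous_pi fun i => ?_)
  fin_cases i <;> simp <;> fun_prop

lemma norm_pol {r : ℝ} (hr : 0 ≤ r) (θ : ℝ) : ‖pol r θ‖ = r := by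
  have h := norm_sq_coord (pol r θ)
  simp only [pol, PiLp.toLp_apply, Matrix.cons_val_zero, Matrix.cons_val_one] at h
  have h2 : ‖pol r θ‖ ^ 2 = r ^ 2 := by
    have := Real.sin_sq_add_cos_sq θ
    unfold pol
    rw [h]
    linear_combination r ^ 2 * this
  exact (sq_eq_sq₀ (norm_nonneg _) hr).1 h2

lemma lipschitz_pol {R : ℝ} (hR : 0 ≤ R) : LipschitzWith R.toNNReal (pol R) := by
  refine LipschitzWith.of_dist_le_mul fun s t => ?_
  rw [Real.coe_toNNReal _ hR, dist_eq_norm, Real.dist_eq]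
  refine le_of_sq_le_sq ?_ (by positivity)
  rw [norm_sq_coord, mul_pow, sq_abs]
  simp only [pol, PiLp.sub_apply, Matrix.cons_val_zero, Matrix.cons_val_one]
  have h1 := Real.one_sub_sq_div_two_le_cos (x := s - t)
  rw [Real.cos_sub] at h1
  have hs := Real.sin_sq_add_cos_sq s
  have ht := Real.sin_sq_add_cos_sq t
  have h3 : (Real.cos s - Real.cos t) ^ 2 + (Real.sin s - Real.sin t) ^ 2 ≤ (s - t) ^ 2 := by
    nlinarith
  have h4 := mul_le_mul_of_nonneg_left h3 (sq_nonneg R)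
  linarith

/-- The Lipschitz parametrisation by the angle bounds the Hausdorff measure of the circle. -/
lemma sphInt_le {R : ℝ} (hR : 0 < R) {G : Ed 2 → ℝ≥0∞} (hG : Measurable G) :
    sphInt R G ≤ ENNReal.ofReal R * ∫⁻ θ in Ioo (-Real.pi) Real.pi, G (pol R θ) := by
  have hc : Continuous (pol R) := continuous_pol.comp (by fun_prop : Continuous fun θ => (R, θ))
  have hmeas : (μH[1] : Measure (Ed 2)).restrict (sphere 0 R)
      ≤ ENNReal.ofReal R • Measure.map (pol R) (volume.restrict (Ioc (-Real.pi) Real.pi)) := by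
    refine Measure.le_iff.2 fun s hs => ?_
    rw [Measure.restrict_apply hs, Measure.smul_apply, Measure.map_apply hc.measurable hs,
      Measure.restrict_apply (hc.measurable hs), smul_eq_mul]
    have hsub : s ∩ sphere 0 R ⊆ pol R '' (pol R ⁻¹' s ∩ Ioc (-Real.pi) Real.pi) := by
      rintro x ⟨hxs, hx⟩
      rw [mem_sphere_zero_iff_norm] at hx
      let z : ℂ := ⟨x 0, x 1⟩
      have hz : ‖z‖ = R := by
        rw [← hx]
        refine (sq_eq_sq₀ (norm_nonneg _) (norm_nonneg _)).1 ?_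
        rw [norm_sq_coord, norm_sq_re_im]
      have hxp : pol R z.arg = x := by
        have h1 := Complex.norm_mul_cos_arg z
        have h2 := Complex.norm_mul_sin_arg z
        rw [hz] at h1 h2
        ext i; fin_cases i
        · simpa [pol] using h1
        · simpa [pol] using h2
      exact ⟨z.arg, ⟨by rw [mem_preimage, hxp]; exact hxs, Complex.arg_mem_Ioc z⟩, hxp⟩
    refine (measure_mono hsub).trans ?_
    have := (lipschitz_pol hR.le).hausdorffMeasure_image_le zero_le_one
      (pol R ⁻¹' s ∩ Ioc (-Real.pi) Real.pi)
    rwa [hausdorffMeasure_real, ENNReal.rpow_one] at this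
  have h21 : ((2 : ℕ) : ℝ) - 1 = 1 := by norm_num
  rw [sphInt, h21]
  refine (lintegral_mono' hmeas le_rfl).trans (le_of_eq ?_)
  rw [lintegral_smul_measure, lintegral_map hG hc.measurable, smul_eq_mul,
    restrict_Ioo_eq_restrict_Ioc]

/-- Integration over a disc in polar coordinates. -/
lemma polar_ball {R : ℝ} {G : Ed 2 → ℝ≥0∞} (hG : Measurable G) :
    ∫⁻ θ in Ioo (-Real.pi) Real.pi, ∫⁻ r in Ioo 0 R, ENNReal.ofReal r * G (pol r θ)
      = ∫⁻ x in ball (0 : Ed 2) R, G x := by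
  let e : Ed 2 ≃ᵐ ℝ × ℝ :=
    (MeasurableEquiv.toLp 2 (Fin 2 → ℝ)).symm.trans MeasurableEquiv.finTwoArrow
  have he : MeasurePreserving e :=
    (volume_preserving_finTwoArrow ℝ).comp
      (EuclideanSpace.volume_preserving_symm_measurableEquiv_toLp (Fin 2))
  have hes : ∀ p : ℝ × ℝ, e.symm (polarCoord.symm p) = pol p.1 p.2 := by
    intro p
    rw [MeasurableEquiv.symm_apply_eq]
    rfl
  let H : Ed 2 → ℝ≥0∞ := (ball (0 : Ed 2) R).indicator G
  have hH : Measurable H := hG.indicator measurableSet_ball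
  have h1 : ∫⁻ p, H (e.symm p) = ∫⁻ x in ball (0 : Ed 2) R, G x := by
    rw [← lintegral_indicator measurableSet_ball]
    exact (he.symm e).lintegral_comp hH
  have hm : Measurable (fun p : ℝ × ℝ => ENNReal.ofReal p.1 * H (pol p.1 p.2)) :=
    (measurable_fst.ennreal_ofReal).mul (hH.comp continuous_pol.measurable)
  rw [← h1, ← lintegral_comp_polarCoord_symm]
  simp only [hes, smul_eq_mul]
  have ht : polarCoord.target = Ioi (0 : ℝ) ×ˢ Ioo (-Real.pi) Real.pi := rfl
  rw [ht, Measure.volume_eq_prod, ← Measure.prod_restrict, lintegral_prod_symm _ hm.aemeasurable]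
  refine lintegral_congr fun θ => ?_
  rw [← Ioi_inter_Iio, ← lintegral_indicator (measurableSet_Ioi.inter measurableSet_Iio),
    ← lintegral_indicator measurableSet_Ioi]
  refine lintegral_congr fun r => ?_
  by_cases hr : 0 < r
  · have : pol r θ ∈ ball (0 : Ed 2) R ↔ r < R := by
      rw [mem_ball_zero_iff, norm_pol hr.le]
    by_cases hrR : r < R
    · simp [H, indicator, hr, hrR, this]
    · simp [H, indicator, hr, hrR, this]
  · simp [indicator, hr]

lemma norm_fderiv_pol_le (u : Ed 2 → ℂ) (x : Ed 2) (θ : ℝ) :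
    ‖fderiv ℝ u x (pol 1 θ)‖ ≤ gn u x := by
  refine le_of_sq_le_sq ?_ (gn_nonneg u x)
  rw [gn_sq, pol_one_eq, map_add, map_smul, map_smul]
  change ‖Real.cos θ • pd u 0 x + Real.sin θ • pd u 1 x‖ ^ 2 ≤ _
  have h1 : ‖Real.cos θ • pd u 0 x + Real.sin θ • pd u 1 x‖
      ≤ |Real.cos θ| * ‖pd u 0 x‖ + |Real.sin θ| * ‖pd u 1 x‖ := by
    refine (norm_add_le _ _).trans ?_
    rw [norm_smul, norm_smul, Real.norm_eq_abs, Real.norm_eq_abs]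
  have h2 := pow_le_pow_left₀ (norm_nonneg _) h1 2
  have h3 := Real.sin_sq_add_cos_sq θ
  rw [← sq_abs (Real.sin θ), ← sq_abs (Real.cos θ)] at h3
  nlinarith [sq_nonneg (|Real.cos θ| * ‖pd u 1 x‖ - |Real.sin θ| * ‖pd u 0 x‖)]

lemma ofReal_norm_sq (u : Ed 2 → ℂ) (x : Ed 2) : ENNReal.ofReal (‖u x‖ ^ 2) = usq u x := by
  rw [usq, ENNReal.ofReal_pow (norm_nonneg _), ofReal_norm]; rfl

lemma ofReal_gn_sq (u : Ed 2 → ℂ) (x : Ed 2) : ENNReal.ofReal (gn u x ^ 2) = gradSq u x := by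
  rw [gn_sq, gradSq, Fin.sum_univ_two, ENNReal.ofReal_add (by positivity) (by positivity),
    ENNReal.ofReal_pow (norm_nonneg _), ENNReal.ofReal_pow (norm_nonneg _),
    ofReal_norm, ofReal_norm]; rfl

/-- The fundamental theorem of calculus for `r² |u(r, θ)|²` along a ray. The factor `r²` makes the
boundary term at the origin vanish and leaves the Jacobian `r` of polar coordinates. -/
lemma radial_ftc {u : Ed 2 → ℂ} (hu : ContDiff ℝ 2 u) {R : ℝ} (hR : 1 ≤ R) (θ : ℝ) :
    ENNReal.ofReal (R ^ 2) * usq u (pol R θ) ≤ ∫⁻ r in Ioo 0 R, ENNReal.ofReal r *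
      (ENNReal.ofReal (3 * R) * (usq u (pol r θ) + gradSq u (pol r θ))) := by
  have hcp : Continuous (fun r => pol r θ) :=
    continuous_pol.comp (by fun_prop : Continuous fun r => (r, θ))
  have hd1 : Continuous (fun r => fderiv ℝ u (pol r θ) (pol 1 θ)) :=
    ((hu.continuous_fderiv (by norm_num)).comp hcp).clm_apply continuous_const
  have hv : ∀ r, HasDerivAt (fun r => u (pol r θ)) (fderiv ℝ u (pol r θ) (pol 1 θ)) r := by
    intro r
    have h1 : HasDerivAt (fun r => pol r θ) (pol 1 θ) r := by
      have h2 : (fun r => pol r θ) = fun r => r • pol 1 θ := funext fun r => pol_eq_smul r θ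
      rw [h2]
      simpa using (hasDerivAt_id r).smul_const (pol 1 θ)
    exact (hu.differentiable (by norm_num) (pol r θ)).hasFDerivAt.comp_hasDerivAt r h1
  let φ' : ℝ → ℝ := fun r => 2 * r * ‖u (pol r θ)‖ ^ 2
    + r ^ 2 * (2 * inner ℝ (u (pol r θ)) (fderiv ℝ u (pol r θ) (pol 1 θ)))
  have hφ : ∀ r, HasDerivAt (fun r => r ^ 2 * ‖u (pol r θ)‖ ^ 2) (φ' r) r := by
    intro r
    have h1 := (hasDerivAt_pow 2 r).mul (hv r).norm_sq
    refine h1.congr_deriv ?_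
    simp [φ']
  have hcφ : Continuous φ' := by
    have := hu.continuous.comp hcp
    have h3 : Continuous fun r => u (pol r θ) := this
    fun_prop
  have hftc := intervalIntegral.integral_eq_sub_of_hasDerivAt (a := 0) (b := R)
    (fun r _ => hφ r) (hcφ.intervalIntegrable 0 R)
  let ψ : ℝ → ℝ := fun r => r * (3 * R * (‖u (pol r θ)‖ ^ 2 + gn u (pol r θ) ^ 2))
  have hcψ : Continuous ψ := by
    have h1 : Continuous fun r => u (pol r θ) := hu.continuous.comp hcp
    have h2 : Continuous fun r => gn u (pol r θ) := (continuous_gn hu).comp hcp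
    fun_prop
  have hle : ∀ r ∈ Icc 0 R, φ' r ≤ ψ r := by
    rintro r ⟨hr0, hrR⟩
    have h1 : inner ℝ (u (pol r θ)) (fderiv ℝ u (pol r θ) (pol 1 θ))
        ≤ ‖u (pol r θ)‖ * gn u (pol r θ) :=
      (real_inner_le_norm _ _).trans
        (mul_le_mul_of_nonneg_left (norm_fderiv_pol_le _ _ _) (norm_nonneg _))
    set U := ‖u (pol r θ)‖
    set g := gn u (pol r θ)
    have h2 : 2 * inner ℝ (u (pol r θ)) (fderiv ℝ u (pol r θ) (pol 1 θ)) ≤ U ^ 2 + g ^ 2 := by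
      nlinarith [sq_nonneg (U - g)]
    calc φ' r ≤ 2 * r * U ^ 2 + r ^ 2 * (U ^ 2 + g ^ 2) := by
          simp only [φ']; gcongr
      _ = r * (2 * U ^ 2 + r * (U ^ 2 + g ^ 2)) := by ring
      _ ≤ r * (2 * R * (U ^ 2 + g ^ 2) + R * (U ^ 2 + g ^ 2)) := by
          gcongr
          · nlinarith [sq_nonneg U]
          · nlinarith [sq_nonneg g]
      _ = ψ r := by simp only [ψ]; ring
  have hintg := intervalIntegral.integral_mono_on (μ := volume) (by linarith : (0:ℝ) ≤ R)
    (hcφ.intervalIntegrable 0 R) (hcψ.intervalIntegrable 0 R) hle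
  rw [hftc] at hintg
  simp only [ne_eq, OfNat.ofNat_ne_zero, not_false_eq_true, zero_pow, zero_mul, sub_zero] at hintg
  rw [intervalIntegral.integral_of_le (by linarith : (0:ℝ) ≤ R)] at hintg
  rw [← ofReal_norm_sq, ← ENNReal.ofReal_mul (by positivity)]
  refine (ENNReal.ofReal_le_ofReal hintg).trans ?_
  rw [restrict_Ioo_eq_restrict_Ioc]
  rw [ofReal_integral_eq_lintegral_ofReal]
  · refine le_of_eq (setLIntegral_congr_fun measurableSet_Ioc fun r hr => ?_)
    simp only [ψ]
    rw [ENNReal.ofReal_mul hr.1.le, ENNReal.ofReal_mul (by positivity),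
      ENNReal.ofReal_add (by positivity) (by positivity), ofReal_norm_sq, ofReal_gn_sq]
  · have h0 : IntegrableOn ψ (Icc 0 R) volume := hcψ.integrableOn_Icc
    exact h0.mono_set Ioc_subset_Icc_self
  · filter_upwards [ae_restrict_mem measurableSet_Ioc] with r hr
    have := hr.1.le
    simp only [ψ, Pi.zero_apply]
    positivity

lemma measurable_usq {u : Ed 2 → ℂ} (hu : ContDiff ℝ 2 u) : Measurable (usq u) := by
  have h : usq u = fun x => ENNReal.ofReal (‖u x‖ ^ 2) := funext fun x => (ofReal_norm_sq u x).symm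
  rw [h]
  exact ((hu.continuous.norm.pow 2).measurable).ennreal_ofReal

lemma measurable_gradSq {u : Ed 2 → ℂ} (hu : ContDiff ℝ 2 u) : Measurable (gradSq u) := by
  have h : gradSq u = fun x => ENNReal.ofReal (gn u x ^ 2) :=
    funext fun x => (ofReal_gn_sq u x).symm
  rw [h]
  exact (((continuous_gn hu).pow 2).measurable).ennreal_ofReal

/-- The trace term: circles are controlled by the two Morrey–Campanato norms. -/
lemma sphere_le {u : Ed 2 → ℂ} (hu : ContDiff ℝ 2 u) {R : ℝ} (hR : 1 ≤ R) :
    (ENNReal.ofReal (R ^ 2))⁻¹ * sphInt R (usq u)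
      ≤ 3 * (nX2r 1 (usq u) + nX2r 1 (gradSq u)) := by
  have hR0 : 0 < R := by linarith
  have hmu := measurable_usq hu
  have hmg := measurable_gradSq hu
  have h1 := sphInt_le hR0 hmu
  have h2 : ENNReal.ofReal (R ^ 2) * ∫⁻ θ in Ioo (-Real.pi) Real.pi, usq u (pol R θ)
      ≤ ENNReal.ofReal (3 * R) * (ENNReal.ofReal R * (nX2r 1 (usq u) + nX2r 1 (gradSq u))) := by
    rw [← lintegral_const_mul' _ _ ENNReal.ofReal_ne_top]
    refine (lintegral_mono fun θ => radial_ftc hu hR θ).trans ?_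
    rw [polar_ball (G := fun x => ENNReal.ofReal (3 * R) * (usq u x + gradSq u x))
      ((hmu.add hmg).const_mul _), lintegral_const_mul' _ _ ENNReal.ofReal_ne_top,
      lintegral_add_left hmu, mul_add (ENNReal.ofReal R)]
    gcongr
    · exact setLIntegral_ball_le hR
    · exact setLIntegral_ball_le hR
  set S := nX2r 1 (usq u) + nX2r 1 (gradSq u)
  set I := ∫⁻ θ in Ioo (-Real.pi) Real.pi, usq u (pol R θ)
  have hc0 : ENNReal.ofReal (R ^ 2) ≠ 0 := by
    rw [ne_eq, ENNReal.ofReal_eq_zero, not_le]; positivity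
  have hI : I ≤ 3 * S := by
    refine (ENNReal.mul_le_mul_iff_right hc0 ENNReal.ofReal_ne_top).1 (h2.trans (le_of_eq ?_))
    rw [← mul_assoc, ← ENNReal.ofReal_mul (by positivity), ← mul_assoc]
    have h3 : (3 : ℝ≥0∞) = ENNReal.ofReal 3 := by simp
    rw [h3, ← ENNReal.ofReal_mul (by positivity)]
    congr 2
    ring
  calc (ENNReal.ofReal (R ^ 2))⁻¹ * sphInt R (usq u)
      ≤ (ENNReal.ofReal (R ^ 2))⁻¹ * (ENNReal.ofReal (R ^ 2) * I) := by
        refine mul_le_mul_right (h1.trans ?_) _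
        gcongr
        nlinarith
    _ = I := by rw [← mul_assoc, ENNReal.inv_mul_cancel hc0 ENNReal.ofReal_ne_top, one_mul]
    _ ≤ _ := hI

/-! ### Absorption -/

lemma integral_le_of_lintegral {f h : Ed 2 → ℝ} (hf : Integrable f) (hh : Integrable h)
    (hf0 : ∀ x, 0 ≤ f x) (hh0 : ∀ x, 0 ≤ h x)
    (H : ∫⁻ x, ENNReal.ofReal (f x) ≤ ∫⁻ x, ENNReal.ofReal (h x)) : ∫ x, f x ≤ ∫ x, h x := by
  rw [← ofReal_integral_eq_lintegral_ofReal hf (ae_of_all _ hf0),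
    ← ofReal_integral_eq_lintegral_ofReal hh (ae_of_all _ hh0)] at H
  exact (ENNReal.ofReal_le_ofReal_iff (integral_nonneg hh0)).1 H

lemma integrable_of_lintegral_lt_top {f : Ed 2 → ℝ} (hf : Continuous f) (hf0 : ∀ x, 0 ≤ f x)
    (H : ∫⁻ x, ENNReal.ofReal (f x) < ⊤) : Integrable f :=
  ⟨hf.aestronglyMeasurable, (hasFiniteIntegral_iff_ofReal (ae_of_all _ hf0)).2 H⟩

lemma mul_nX2r_le (c : ℝ) (G : Ed 2 → ℝ≥0∞) :
    ENNReal.ofReal c * nX2r 1 G ≤ nX2r 1 (fun x => ENNReal.ofReal c * G x) := by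
  unfold nX2r
  simp only [ENNReal.mul_iSup]
  refine iSup₂_mono fun R _ => ?_
  rw [lintegral_const_mul' _ _ ENNReal.ofReal_ne_top, mul_left_comm]

/-- The absorption argument. With `s = √τ`, `Q = ‖∇u‖²_X + τ‖u‖²_X` and `A = Au + Mu`, the mass
and energy identities turn the `ε` term of the Morawetz estimate into `2 s A` when `|ε| ≤ τ`, and
bound `Q` by `4 A` directly when `|ε| > τ`; the potential terms cost `O(K/s) Q`, which is
absorbed since `144 K ≤ s`. -/
lemma absorb {a τ s e K n U G Au Ag Mu Mg xu xg : ℝ}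
    (hs : 1 ≤ s) (hsτ : s ^ 2 = τ) (haτ : a ≤ τ) (hK : 0 < K) (hKs : 144 * K ≤ s) (he : 0 ≤ e)
    (hn : 0 ≤ n) (hU : 0 ≤ U) (hAu : 0 ≤ Au) (hAg : 0 ≤ Ag) (hMu0 : 0 ≤ Mu)
    (hxu : 0 ≤ xu) (hxg : 0 ≤ xg)
    (h1 : e * U ≤ Au + Mu) (h2 : G ≤ (τ + a) * U + (Au + Mu))
    (h3 : xg ≤ 6 * (3 * Mu + (s / 2 * Mu + Mg / (2 * s)) + (Au + Ag) + e / 2 * (s * U + G / s)))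
    (h4 : τ * xu ≤ 6 * (3 * Mu + (s / 2 * Mu + Mg / (2 * s)) + (Au + Ag)
      + e / 2 * (s * U + G / s)))
    (hxgG : xg ≤ G) (hxuU : xu ≤ U) (hMu : Mu ≤ K * xu) (hMg : Mg ≤ K * xg)
    (hAgn : Ag ≤ n * √(2 * xg)) (hAun : Au ≤ n * √(2 * xu)) :
    xg + τ * xu ≤ 18432 * n ^ 2 := by
  have hs0 : 0 < s := by linarith
  have hτ0 : 0 < τ := by rw [← hsτ]; positivity
  have hτ1 : 1 ≤ τ := by rw [← hsτ]; nlinarith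
  set Q := xg + τ * xu with hQ
  have hQ0 : 0 ≤ Q := by positivity
  obtain ⟨k, hk⟩ : ∃ k, k = K / s := ⟨_, rfl⟩
  have hk0 : 0 < k := by rw [hk]; positivity
  have hk1 : k ≤ 1 / 144 := by rw [hk, div_le_iff₀ hs0]; linarith
  have hKk : K = k * s := by rw [hk]; field_simp
  have hsMu : s * Mu ≤ k * (τ * xu) := by
    calc s * Mu ≤ s * (K * xu) := by gcongr
      _ = k * (τ * xu) := by rw [hKk, ← hsτ]; ring
  have hMgs : Mg / s ≤ k * xg := by
    rw [div_le_iff₀ hs0]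
    calc Mg ≤ K * xg := hMg
      _ = k * xg * s := by rw [hKk]; ring
  have hMus : Mu ≤ s * Mu := by nlinarith
  have hAus : Au ≤ s * Au := by nlinarith
  have hkxg : 0 ≤ k * xg := by positivity
  have hkxu : 0 ≤ k * (τ * xu) := by positivity
  have hkQ : k * Q = k * xg + k * (τ * xu) := by rw [hQ]; ring
  have hmain : Q ≤ 12 * (6 * (k * Q) + Ag + 3 * (s * Au)) := by
    rcases le_or_gt e τ with heτ | heτ
    · have hsU : e * (s * U) ≤ s * (Au + Mu) := by
        calc e * (s * U) = s * (e * U) := by ring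
          _ ≤ _ := by gcongr
      have hG : e * (G / s) ≤ 3 * (s * (Au + Mu)) := by
        have hA : 0 ≤ Au + Mu := by positivity
        have hG1 : e * G ≤ 3 * τ * (Au + Mu) := by
          calc e * G ≤ e * ((τ + a) * U + (Au + Mu)) := by gcongr
            _ = (τ + a) * (e * U) + e * (Au + Mu) := by ring
            _ ≤ (2 * τ) * (e * U) + τ * (Au + Mu) := by
                have : 0 ≤ e * U := by positivity
                gcongr; linarith
            _ ≤ (2 * τ) * (Au + Mu) + τ * (Au + Mu) := by gcongr
            _ = _ := by ring
        rw [← mul_div_assoc, div_le_iff₀ hs0]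
        calc e * G ≤ 3 * τ * (Au + Mu) := hG1
          _ = _ := by rw [← hsτ]; ring
      have hMg2 : Mg / (2 * s) = (Mg / s) / 2 := by field_simp
      rw [hMg2] at h3 h4
      have : e / 2 * (s * U + G / s) = (e * (s * U) + e * (G / s)) / 2 := by ring
      rw [this] at h3 h4
      linarith
    · have h5 : τ * U ≤ e * U := by gcongr
      have h6 : (τ + a) * U ≤ 2 * (τ * U) := by nlinarith
      have h7 : τ * xu ≤ τ * U := by gcongr
      linarith
  have hQ1 : Q ≤ 24 * (Ag + 3 * (s * Au)) := by
    have := mul_le_mul_of_nonneg_right hk1 hQ0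
    linarith
  have hQg : xg ≤ Q := le_add_of_nonneg_right (by positivity)
  have hQu : τ * xu ≤ Q := le_add_of_nonneg_left hxg
  have hAg2 : Ag ≤ n * √(2 * Q) := by
    refine hAgn.trans ?_
    gcongr
  have hAu2 : s * Au ≤ n * √(2 * Q) := by
    have h8 : s * √(2 * xu) = √(2 * (τ * xu)) := by
      rw [show 2 * (τ * xu) = s ^ 2 * (2 * xu) by rw [hsτ]; ring, Real.sqrt_mul (sq_nonneg s),
        Real.sqrt_sq hs0.le]
    calc s * Au ≤ s * (n * √(2 * xu)) := by gcongr
      _ = n * √(2 * (τ * xu)) := by rw [← h8]; ring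
      _ ≤ _ := by gcongr
  have hQ2 : Q ≤ 96 * (n * √(2 * Q)) := by linarith
  by_cases hQz : Q = 0
  · rw [hQz]; positivity
  have hQp : 0 < Q := lt_of_le_of_ne hQ0 (Ne.symm hQz)
  have h9 : Q ^ 2 ≤ (96 * (n * √(2 * Q))) ^ 2 := pow_le_pow_left₀ hQ0 hQ2 2
  have h10 : (96 * (n * √(2 * Q))) ^ 2 = 18432 * n ^ 2 * Q := by
    rw [mul_pow, mul_pow, Real.sq_sqrt (by positivity)]; ring
  rw [h10, sq] at h9
  exact le_of_mul_le_mul_right h9 hQp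

/-- The resolvent estimate without the trace term, with the constants made explicit. -/
theorem Sys.resolvent {a γ K : ℝ} (hK : 0 < K)
    (hKw : ∀ G : Ed 2 → ℝ≥0∞, Measurable G →
      ∫⁻ x, ENNReal.ofReal (mm a γ x) * G x ≤ ENNReal.ofReal K * nX2r 1 G)
    {τ ε : ℝ} {V : Ed 2 → ℝ} {u : Ed 2 → ℂ} {g : Ed 2 → ℝ} (S : Sys a γ τ ε V u g)
    (haτ : a ≤ τ) (hKτ : (144 * K) ^ 2 ≤ τ) :
    nX2r 1 (gradSq u) + ENNReal.ofReal τ * nX2r 1 (usq u)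
      ≤ ENNReal.ofReal 18432 * nXstarr 1 (fun x => ENNReal.ofReal (g x) ^ 2) ^ 2 := by
  set N := nXstarr 1 (fun x => ENNReal.ofReal (g x) ^ 2) with hN
  by_cases hNt : N = ⊤
  · rw [hNt]; simp
  have ha0 : 0 ≤ a := zero_le_one.trans S.ha
  have hτ1 : 1 ≤ τ := S.ha.trans haτ
  have hm0 := fun x => mm_nonneg (γ := γ) ha0 x
  have hg0 := S.hg0
  have hgn0 := gn_nonneg u
  have cu := S.hu.continuous
  have cg := S.hg
  have cm := continuous_mm a γ
  have cgn := continuous_gn S.hu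
  have mu := measurable_usq S.hu
  have mg := measurable_gradSq S.hu
  have hlU : ENNReal.ofReal (∫ x, ‖u x‖ ^ 2) = ∫⁻ x, usq u x := by
    rw [ofReal_integral_eq_lintegral_ofReal S.hu2 (ae_of_all _ fun x => by positivity)]
    simp only [ofReal_norm_sq]
  have hlG : ENNReal.ofReal (∫ x, gn u x ^ 2) = ∫⁻ x, gradSq u x := by
    rw [ofReal_integral_eq_lintegral_ofReal S.hgrad2 (ae_of_all _ fun x => by positivity)]
    simp only [ofReal_gn_sq]
  have hXuU : nX2r 1 (usq u) ≤ ENNReal.ofReal (∫ x, ‖u x‖ ^ 2) := hlU ▸ nX2r_le_lintegral _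
  have hXgG : nX2r 1 (gradSq u) ≤ ENNReal.ofReal (∫ x, gn u x ^ 2) := hlG ▸ nX2r_le_lintegral _
  have hXu : nX2r 1 (usq u) ≠ ⊤ := ne_top_of_le_ne_top ENNReal.ofReal_ne_top hXuU
  have hXg : nX2r 1 (gradSq u) ≠ ⊤ := ne_top_of_le_ne_top ENNReal.ofReal_ne_top hXgG
  have lMu : ∫⁻ x, ENNReal.ofReal (mm a γ x * ‖u x‖ ^ 2) ≤ ENNReal.ofReal K * nX2r 1 (usq u) := by
    refine le_trans (le_of_eq (lintegral_congr fun x => ?_)) (hKw _ mu)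
    rw [ENNReal.ofReal_mul (hm0 x), ofReal_norm_sq]
  have lMg : ∫⁻ x, ENNReal.ofReal (mm a γ x * gn u x ^ 2)
      ≤ ENNReal.ofReal K * nX2r 1 (gradSq u) := by
    refine le_trans (le_of_eq (lintegral_congr fun x => ?_)) (hKw _ mg)
    rw [ENNReal.ofReal_mul (hm0 x), ofReal_gn_sq]
  have lAu : ∫⁻ x, ENNReal.ofReal (g x * ‖u x‖) ≤ N * (2 * nX2r 1 (usq u)) ^ (1 / 2 : ℝ) := by
    have h := duality (g := fun x => ENNReal.ofReal (g x)) (v := fun x => ENNReal.ofReal ‖u x‖)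
      cg.measurable.ennreal_ofReal cu.norm.measurable.ennreal_ofReal
    have h2 : (fun x => ENNReal.ofReal ‖u x‖ ^ 2) = usq u := by
      ext x; rw [← ENNReal.ofReal_pow (norm_nonneg _), ofReal_norm_sq]
    rw [h2] at h
    refine le_trans (le_of_eq (lintegral_congr fun x => ?_)) h
    rw [ENNReal.ofReal_mul (hg0 x)]
  have lAg : ∫⁻ x, ENNReal.ofReal (g x * gn u x)
      ≤ N * (2 * nX2r 1 (gradSq u)) ^ (1 / 2 : ℝ) := by
    have h := duality (g := fun x => ENNReal.ofReal (g x)) (v := fun x => ENNReal.ofReal (gn u x))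
      cg.measurable.ennreal_ofReal cgn.measurable.ennreal_ofReal
    have h2 : (fun x => ENNReal.ofReal (gn u x) ^ 2) = gradSq u := by
      ext x; rw [← ENNReal.ofReal_pow (hgn0 x), ofReal_gn_sq]
    rw [h2] at h
    refine le_trans (le_of_eq (lintegral_congr fun x => ?_)) h
    rw [ENNReal.ofReal_mul (hg0 x)]
  have tMu : ENNReal.ofReal K * nX2r 1 (usq u) ≠ ⊤ := ENNReal.mul_ne_top ENNReal.ofReal_ne_top hXu
  have tMg : ENNReal.ofReal K * nX2r 1 (gradSq u) ≠ ⊤ :=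
    ENNReal.mul_ne_top ENNReal.ofReal_ne_top hXg
  have tAu : N * (2 * nX2r 1 (usq u)) ^ (1 / 2 : ℝ) ≠ ⊤ :=
    ENNReal.mul_ne_top hNt (ENNReal.rpow_ne_top_of_nonneg (by norm_num)
      (ENNReal.mul_ne_top (by simp) hXu))
  have tAg : N * (2 * nX2r 1 (gradSq u)) ^ (1 / 2 : ℝ) ≠ ⊤ :=
    ENNReal.mul_ne_top hNt (ENNReal.rpow_ne_top_of_nonneg (by norm_num)
      (ENNReal.mul_ne_top (by simp) hXg))
  have pMu : ∀ x, 0 ≤ mm a γ x * ‖u x‖ ^ 2 := fun x => mul_nonneg (hm0 x) (by positivity)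
  have pMg : ∀ x, 0 ≤ mm a γ x * gn u x ^ 2 := fun x => mul_nonneg (hm0 x) (by positivity)
  have pAu : ∀ x, 0 ≤ g x * ‖u x‖ := fun x => mul_nonneg (hg0 x) (norm_nonneg _)
  have pAg : ∀ x, 0 ≤ g x * gn u x := fun x => mul_nonneg (hg0 x) (hgn0 x)
  have iMu : Integrable (fun x => mm a γ x * ‖u x‖ ^ 2) :=
    integrable_of_lintegral_lt_top (by fun_prop) pMu (lMu.trans_lt tMu.lt_top)
  have iMg : Integrable (fun x => mm a γ x * gn u x ^ 2) :=
    integrable_of_lintegral_lt_top (by fun_prop) pMg (lMg.trans_lt tMg.lt_top)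
  have iAu : Integrable (fun x => g x * ‖u x‖) :=
    integrable_of_lintegral_lt_top (by fun_prop) pAu (lAu.trans_lt tAu.lt_top)
  have iAg : Integrable (fun x => g x * gn u x) :=
    integrable_of_lintegral_lt_top (by fun_prop) pAg (lAg.trans_lt tAg.lt_top)
  rw [← ofReal_integral_eq_lintegral_ofReal iMu (ae_of_all _ pMu)] at lMu
  rw [← ofReal_integral_eq_lintegral_ofReal iMg (ae_of_all _ pMg)] at lMg
  rw [← ofReal_integral_eq_lintegral_ofReal iAu (ae_of_all _ pAu)] at lAu
  rw [← ofReal_integral_eq_lintegral_ofReal iAg (ae_of_all _ pAg)] at lAg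
  have rMu := (ENNReal.ofReal_le_iff_le_toReal tMu).1 lMu
  have rMg := (ENNReal.ofReal_le_iff_le_toReal tMg).1 lMg
  have rAu := (ENNReal.ofReal_le_iff_le_toReal tAu).1 lAu
  have rAg := (ENNReal.ofReal_le_iff_le_toReal tAg).1 lAg
  rw [ENNReal.toReal_mul, ENNReal.toReal_ofReal hK.le] at rMu rMg
  rw [ENNReal.toReal_mul, ← ENNReal.toReal_rpow, ENNReal.toReal_mul, ENNReal.toReal_ofNat,
    ← Real.sqrt_eq_rpow] at rAu rAg
  have rU := ENNReal.toReal_le_of_le_ofReal (integral_nonneg fun x => by positivity) hXuU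
  have rG := ENNReal.toReal_le_of_le_ofReal (integral_nonneg fun x => by positivity) hXgG
  have hmass : |ε| * ∫ x, ‖u x‖ ^ 2 ≤ (∫ x, g x * ‖u x‖) + ∫ x, mm a γ x * ‖u x‖ ^ 2 := by
    have h := integral_le_of_lintegral (S.hu2.const_mul |ε|) (iAu.add iMu)
      (fun x => by positivity) (fun x => add_nonneg (pAu x) (pMu x)) S.eps_mass
    rwa [integral_const_mul, integral_add' iAu iMu] at h
  have henergy : ∫ x, gn u x ^ 2 ≤ (τ + a) * (∫ x, ‖u x‖ ^ 2)
      + ((∫ x, g x * ‖u x‖) + ∫ x, mm a γ x * ‖u x‖ ^ 2) := by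
    have h := integral_le_of_lintegral S.hgrad2 ((S.hu2.const_mul (τ + a)).add (iAu.add iMu))
      (fun x => by positivity)
      (fun x => add_nonneg (by positivity) (add_nonneg (pAu x) (pMu x))) S.energy
    rwa [integral_add' (S.hu2.const_mul (τ + a)) (iAu.add iMu), integral_const_mul,
      integral_add' iAu iMu] at h
  -- `b` is the right-hand side of the Morawetz estimate after Young's inequality with weight `√τ`
  obtain ⟨s, hs⟩ : ∃ s, s = √τ := ⟨_, rfl⟩
  have hs1 : 1 ≤ s := by rw [hs]; exact Real.one_le_sqrt.2 hτ1
  have hs0 : 0 < s := by linarith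
  have hsτ : s ^ 2 = τ := by rw [hs]; exact Real.sq_sqrt S.hτ
  have hKs : 144 * K ≤ s := by rw [hs]; exact Real.le_sqrt_of_sq_le hKτ
  let b : Ed 2 → ℝ := fun x => 3 * (mm a γ x * ‖u x‖ ^ 2)
    + (s / 2 * (mm a γ x * ‖u x‖ ^ 2) + 1 / (2 * s) * (mm a γ x * gn u x ^ 2))
    + (g x * ‖u x‖ + g x * gn u x) + |ε| / 2 * (s * ‖u x‖ ^ 2 + 1 / s * gn u x ^ 2)
  have i1 := (iMu.const_mul (s / 2)).add (iMg.const_mul (1 / (2 * s)))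
  have i2 := (iMu.const_mul 3).add i1
  have i3 := i2.add (iAu.add iAg)
  have i4 := ((S.hu2.const_mul s).add (S.hgrad2.const_mul (1 / s))).const_mul (|ε| / 2)
  have ib : Integrable b := i3.add i4
  have hb0 : ∀ x, 0 ≤ b x := fun x => by
    have := pMu x
    have := pMg x
    have := pAu x
    have := pAg x
    simp only [b]; positivity
  have hbint : ∫ x, b x = 3 * (∫ x, mm a γ x * ‖u x‖ ^ 2)
      + (s / 2 * (∫ x, mm a γ x * ‖u x‖ ^ 2) + (∫ x, mm a γ x * gn u x ^ 2) / (2 * s))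
      + ((∫ x, g x * ‖u x‖) + ∫ x, g x * gn u x)
      + |ε| / 2 * (s * (∫ x, ‖u x‖ ^ 2) + (∫ x, gn u x ^ 2) / s) := by
    have e1 := integral_add' i3 i4
    change (∫ x, b x) = _ at e1
    rw [e1, integral_add' i2 (iAu.add iAg), integral_add' (iMu.const_mul 3) i1,
      integral_add' (iMu.const_mul (s / 2)) (iMg.const_mul (1 / (2 * s))), integral_add' iAu iAg,
      integral_const_mul, integral_const_mul, integral_const_mul, integral_const_mul,
      integral_add' (S.hu2.const_mul s) (S.hgrad2.const_mul (1 / s)), integral_const_mul,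
      integral_const_mul]
    ring
  have hyoung : ∀ p q : ℝ, p * q ≤ 1 / 2 * (s * p ^ 2 + 1 / s * q ^ 2) := by
    intro p q
    have h : 0 ≤ (s * p - q) ^ 2 / s := by positivity
    have h' : (s * p - q) ^ 2 / s = s * p ^ 2 - 2 * (p * q) + 1 / s * q ^ 2 := by
      field_simp; ring
    linarith
  have hball : ∀ R : ℝ, 1 ≤ R → (ENNReal.ofReal R)⁻¹ * ∫⁻ x in ball (0 : Ed 2) R,
      ENNReal.ofReal (gn u x ^ 2 + τ * ‖u x‖ ^ 2) ≤ ENNReal.ofReal (6 * ∫ x, b x) := by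
    intro R hR
    have hτ0 := S.hτ
    refine (ball_le_weight hR _ fun x => by positivity).trans ?_
    rw [ENNReal.ofReal_mul (by norm_num), ENNReal.ofReal_ofNat,
      ofReal_integral_eq_lintegral_ofReal ib (ae_of_all _ hb0)]
    refine mul_le_mul_right ((S.morawetz hR).trans (lintegral_mono fun x => ?_)) _
    refine ENNReal.ofReal_le_ofReal ?_
    have y1 := mul_le_mul_of_nonneg_left (hyoung ‖u x‖ (gn u x)) (hm0 x)
    have y2 := mul_le_mul_of_nonneg_left (hyoung ‖u x‖ (gn u x)) (abs_nonneg ε)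
    have e3 : 1 / (2 * s) * (mm a γ x * gn u x ^ 2) = mm a γ x * (1 / 2 * (1 / s * gn u x ^ 2)) := by
      field_simp
    simp only [b]
    rw [e3]
    linarith
  have hb6 : 0 ≤ 6 * ∫ x, b x := mul_nonneg (by norm_num) (integral_nonneg hb0)
  have hXg6 : nX2r 1 (gradSq u) ≤ ENNReal.ofReal (6 * ∫ x, b x) := by
    refine iSup₂_le fun R hR => le_trans ?_ (hball R hR)
    refine mul_le_mul_right (lintegral_mono fun x => ?_) _
    rw [← ofReal_gn_sq]
    have hτ0 := S.hτ
    exact ENNReal.ofReal_le_ofReal (le_add_of_nonneg_right (by positivity))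
  have hXu6 : ENNReal.ofReal τ * nX2r 1 (usq u) ≤ ENNReal.ofReal (6 * ∫ x, b x) := by
    refine (mul_nX2r_le _ _).trans (iSup₂_le fun R hR => le_trans ?_ (hball R hR))
    refine mul_le_mul_right (lintegral_mono fun x => ?_) _
    rw [← ofReal_norm_sq, ← ENNReal.ofReal_mul S.hτ]
    exact ENNReal.ofReal_le_ofReal (le_add_of_nonneg_left (by positivity))
  have rXg := ENNReal.toReal_le_of_le_ofReal hb6 hXg6
  have rXu := ENNReal.toReal_le_of_le_ofReal hb6 hXu6
  rw [ENNReal.toReal_mul, ENNReal.toReal_ofReal S.hτ] at rXu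
  rw [hbint] at rXg rXu
  have hfin := absorb hs1 hsτ haτ hK hKs (abs_nonneg ε) (ENNReal.toReal_nonneg (a := N))
    (integral_nonneg fun x => by positivity) (integral_nonneg pAu) (integral_nonneg pAg)
    (integral_nonneg pMu) ENNReal.toReal_nonneg ENNReal.toReal_nonneg hmass henergy rXg rXu
    rG rU rMu rMg rAg rAu
  have hL : nX2r 1 (gradSq u) + ENNReal.ofReal τ * nX2r 1 (usq u)
      = ENNReal.ofReal ((nX2r 1 (gradSq u)).toReal + τ * (nX2r 1 (usq u)).toReal) := by
    have hτ0 := S.hτ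
    rw [ENNReal.ofReal_add ENNReal.toReal_nonneg (by positivity), ENNReal.ofReal_mul S.hτ,
      ENNReal.ofReal_toReal hXg, ENNReal.ofReal_toReal hXu]
  rw [hL]
  refine (ENNReal.ofReal_le_ofReal hfin).trans (le_of_eq ?_)
  rw [ENNReal.ofReal_mul (by norm_num), ENNReal.ofReal_pow ENNReal.toReal_nonneg,
    ENNReal.ofReal_toReal hNt]

/-! ### Reduction and conclusion -/

lemma continuous_lap {u : Ed 2 → ℂ} (hu : ContDiff ℝ 2 u) : Continuous (lap u) := by
  unfold lap
  refine continuous_finsetSum _ fun i _ => ?_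
  have h : ContDiff ℝ 1 (pd u i) := by
    unfold pd
    exact (hu.fderiv_right (m := 1) (by norm_num)).clm_apply contDiff_const
  exact (h.continuous_fderiv (by norm_num)).clm_apply continuous_const

lemma nXstarr_mono {F G : Ed 2 → ℝ≥0∞} (h : ∀ x, F x ≤ G x) : nXstarr 1 F ≤ nXstarr 1 G := by
  unfold nXstarr
  gcongr with j
  · exact h _
  · exact h _

/-- resolvent estimate for long range potentials without smallness
assumptions in dimension 2, for a suitable `τ₀` and all `τ ≥ B(τ₀)`. -/
theorem stmt_8 (a γ : ℝ) (ha : 0 < a) (hγ : 0 < γ) :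
    ∃ τ₀ B C : ℝ, 0 < τ₀ ∧ 0 < B ∧ 0 < C ∧
      ∀ (V₁ V₂ : Ed 2 → ℝ), ContDiff ℝ 1 V₁ →
      (∀ x : Ed 2, |V₁ x| ≤ a * (1 + ‖x‖) ^ (-γ)) →
      (∀ x : Ed 2, |V₂ x| ≤ a * (1 + ‖x‖) ^ (-γ - 1)) →
      (∀ x : Ed 2, radialDeriv V₁ x ≤ a * (1 + ‖x‖) ^ (-γ - 1)) →
      ∀ (ε τ : ℝ), ε ≠ 0 → B ≤ τ →
      ∀ (σ : ℝ), σ = 1 ∨ σ = -1 →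
      ∀ (u f : Ed 2 → ℂ), ContDiff ℝ 2 u →
      (∫⁻ x, usq u x) < ⊤ → (∫⁻ x, gradSq u x) < ⊤ → (∫⁻ x, usq f x) < ⊤ →
      (∀ x, -lap u x + ((V₁ x : ℂ) + (V₂ x : ℂ)) * u x
        + (σ : ℂ) * ((ε : ℂ) * Complex.I) * u x - (τ : ℂ) * u x = f x) →
      nX2r τ₀ (gradSq u)
        + ENNReal.ofReal τ * nX2r τ₀ (usq u)
        + (⨆ (R : ℝ) (_ : τ₀ ≤ R), (ENNReal.ofReal (R^2))⁻¹ * sphInt R (usq u))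
      ≤ ENNReal.ofReal C * (nXstarr τ₀ (usq f)) ^ 2 := by
  -- the decay hypotheses persist for a larger `a` and a smaller `γ`, so `a ≥ 1` and `γ ≤ 1` may be
  -- assumed; this is what makes `(1 + |x|)^{-3}` smaller than the short-range profile
  set a' := a + 1 with ha'
  set γ' := min γ 1 with hγ'
  have hγ'0 : 0 < γ' := lt_min hγ one_pos
  have hγγ : γ' ≤ γ := min_le_left _ _
  have hmono : ∀ (x : Ed 2) (c c' : ℝ), c ≤ c' → a * (1 + ‖x‖) ^ c ≤ a' * (1 + ‖x‖) ^ c' := by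
    intro x c c' hcc
    have h1 : (1 : ℝ) ≤ 1 + ‖x‖ := by linarith [norm_nonneg x]
    have := Real.rpow_le_rpow_of_exponent_le h1 hcc
    gcongr
    linarith
  obtain ⟨K, hK, hKw⟩ := weighted_le (a := a') (by positivity) hγ'0
  refine ⟨1, a' + (144 * K) ^ 2, 4 * 18432, one_pos, by positivity, by norm_num, ?_⟩
  intro V₁ V₂ hV₁ hV₁b hV₂b hV₁r ε τ _ hBτ σ _ u f hu hu2 hgrad2 _ heq
  have hK2 : 0 ≤ (144 * K) ^ 2 := by positivity
  have haτ : a' ≤ τ := by linarith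
  have hKτ : (144 * K) ^ 2 ≤ τ := by linarith
  have hτ1 : 1 ≤ τ := by linarith
  have hτ0 : 0 ≤ τ := by linarith
  -- `h = f - V₂ u` is continuous although `f` and `V₂` need not even be measurable
  let h : Ed 2 → ℂ := fun x =>
    -lap u x + ((V₁ x - τ : ℝ) : ℂ) * u x + ((σ * ε : ℝ) : ℂ) * Complex.I * u x
  have hh : ∀ x, h x = f x - (V₂ x : ℂ) * u x := by
    intro x
    rw [← heq x]
    simp only [h]
    push_cast
    ring
  let g : Ed 2 → ℝ := fun x => max (‖h x‖ - mm a' γ' x * ‖u x‖) 0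
  have hcg : Continuous g := by
    have c1 := continuous_lap hu
    have c2 := hu.continuous
    have c3 := hV₁.continuous
    have c4 := continuous_mm a' γ'
    fun_prop
  have hgf : ∀ x, g x ≤ ‖f x‖ := by
    intro x
    refine max_le ?_ (norm_nonneg _)
    have h1 : ‖h x‖ ≤ ‖f x‖ + |V₂ x| * ‖u x‖ := by
      rw [hh x]
      refine (norm_sub_le _ _).trans ?_
      rw [norm_mul, Complex.norm_real, Real.norm_eq_abs]
    have h2 : |V₂ x| ≤ mm a' γ' x := (hV₂b x).trans (hmono x _ _ (by linarith))
    have h3 := mul_le_mul_of_nonneg_right h2 (norm_nonneg (u x))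
    linarith
  have S : Sys a' γ' τ (σ * ε) V₁ u g :=
    { ha := by linarith
      hγ := hγ'0
      hγ1 := min_le_right _ _
      hτ := hτ0
      hu := hu
      hV := hV₁
      hVb := fun x => (hV₁b x).trans (hmono x _ _ (by linarith))
      hVr := fun x => (hV₁r x).trans (hmono x _ _ (by linarith))
      hg := hcg
      hg0 := fun x => le_max_right _ _
      hh := fun x => by
        have : ‖h x‖ - mm a' γ' x * ‖u x‖ ≤ g x := le_max_left _ _
        change ‖h x‖ ≤ _
        linarith
      hu2 := integrable_of_lintegral_lt_top (hu.continuous.norm.pow 2)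
        (fun x => by positivity) (by simpa only [ofReal_norm_sq] using hu2)
      hgrad2 := integrable_of_lintegral_lt_top ((continuous_gn hu).pow 2)
        (fun x => by positivity) (by simpa only [ofReal_gn_sq] using hgrad2) }
  have hres := S.resolvent hK hKw haτ hKτ
  have hN : nXstarr 1 (fun x => ENNReal.ofReal (g x) ^ 2) ≤ nXstarr 1 (usq f) := by
    refine nXstarr_mono fun x => ?_
    rw [← ofReal_norm_sq, ENNReal.ofReal_pow (norm_nonneg _)]
    have := ENNReal.ofReal_le_ofReal (hgf x)
    gcongr
  set Q := nX2r 1 (gradSq u) + ENNReal.ofReal τ * nX2r 1 (usq u) with hQ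
  have hsph : (⨆ (R : ℝ) (_ : 1 ≤ R), (ENNReal.ofReal (R^2))⁻¹ * sphInt R (usq u)) ≤ 3 * Q := by
    refine iSup₂_le fun R hR => (sphere_le hu hR).trans ?_
    rw [hQ, add_comm (nX2r 1 (usq u))]
    gcongr
    exact le_mul_of_one_le_left zero_le (ENNReal.one_le_ofReal.2 hτ1)
  calc Q + _ ≤ Q + 3 * Q := by gcongr
    _ = 4 * Q := by ring
    _ ≤ 4 * (ENNReal.ofReal 18432 * nXstarr 1 (usq f) ^ 2) := by
        refine mul_le_mul_right (hres.trans ?_) _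
        gcongr
    _ = _ := by
        rw [ENNReal.ofReal_mul (by norm_num)]
        simp only [ENNReal.ofReal_ofNat, mul_assoc]
end
end

section
/- Let d ≥ 1 and for R > 0 define ψ_R : ℝ^d → (0,∞) by ψ_R(x) = 1/(R(1+|x|²/R²)). Then there exists a constant C depending only on d (independent of R) such that for every R > 0 and all measurable g, f : ℝ^d → ℂ: (i) ∫_{ℝ^d} |g(x)|² ψ_R(x) dx ≤ C·‖g‖²_X, and (ii) ‖f‖²_{X*} ≤ C·∫_{ℝ^d} |f(x)|² ψ_R(x)^{−1} dx. -/
/-!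
Both bounds come from a dyadic decomposition at scale `R`.

For the first, `ψ_R ≤ Σ_{n ≥ 0} (4 · 4⁻ⁿ / R) 1_{B(0, 2ⁿ R)}` pointwise (`exists_psiR_le`).
Integrating against `|g|²` and using `∫_{B(0, r)} |g|² ≤ r ‖g‖²_X` with `r = 2ⁿ R` leaves the
geometric series `Σ 4 · 2⁻ⁿ = 8` (`lintegral_mul_psiR_le`).

For the second, `ψ_R⁻¹ ≥ w_j := R + 4^j / R` on the shell `C_j`, so Cauchy–Schwarz in `j` gives
`‖f‖²_{X*} ≤ (Σ_j 2^(j+1) / w_j) (Σ_j w_j ∫_{C_j} |f|²)`. The last factor is at most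
`∫ |f|² ψ_R⁻¹` because the shells are disjoint (`tsum_shellWeight_le`). If `2^k ≤ R < 2^(k+1)`,
the coefficients `2^(j+1) / w_j` are at most `4 · 2^(-|j - k|)`, so their sum is bounded
independently of `R` (`tsum_div_shellWeight_le`).
-/

noncomputable section
open MeasureTheory Metric Set ENNReal

/-- the weight ψ_R(x) = 1/(R(1+|x|²/R²)) -/
def psiR {d : ℕ} (R : ℝ) (x : Ed d) : ℝ := 1 / (R * (1 + ‖x‖ ^ 2 / R ^ 2))

/-- The ball masses that define `nX2`, with the factor `1/r` cleared. -/
lemma setLIntegral_ball_le_s19 {d : ℕ} (g : Ed d → ℝ≥0∞) {r : ℝ} (hr : 0 < r) :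
    ∫⁻ x in ball (0 : Ed d) r, g x ≤ ENNReal.ofReal r * nX2 g := by
  have h : (ENNReal.ofReal r)⁻¹ * ∫⁻ x in ball (0 : Ed d) r, g x ≤ nX2 g :=
    le_iSup₂ (f := fun (R : ℝ) (_ : 0 < R) =>
      (ENNReal.ofReal R)⁻¹ * ∫⁻ x in ball (0 : Ed d) R, g x) r hr
  have h0 : ENNReal.ofReal r ≠ 0 := by simpa using hr
  calc ∫⁻ x in ball (0 : Ed d) r, g x
      = ENNReal.ofReal r * ((ENNReal.ofReal r)⁻¹ * ∫⁻ x in ball (0 : Ed d) r, g x) := by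
        rw [← mul_assoc, ENNReal.mul_inv_cancel h0 ENNReal.ofReal_ne_top, one_mul]
    _ ≤ _ := by gcongr

/-- Every point lies in a ball `B(0, 2^n R)` on which `ψ_R` is at most `4 · 4⁻ⁿ / R`. -/
lemma exists_psiR_le {d : ℕ} {R : ℝ} (hR : 0 < R) (x : Ed d) :
    ∃ n : ℕ, x ∈ ball (0 : Ed d) (2 ^ n * R) ∧ psiR R x ≤ 4 * (1 / 4) ^ n / R := by
  have hex : ∃ n : ℕ, ‖x‖ < 2 ^ n * R := by
    obtain ⟨n, hn⟩ := pow_unbounded_of_one_lt (‖x‖ / R) (one_lt_two)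
    exact ⟨n, (div_lt_iff₀ hR).1 hn⟩
  classical
  refine ⟨Nat.find hex, by simpa using Nat.find_spec hex, ?_⟩
  rcases hn : Nat.find hex with _ | n
  · have : 0 ≤ ‖x‖ ^ 2 / R ^ 2 := by positivity
    unfold psiR
    rw [div_le_div_iff₀ (by positivity) hR]
    nlinarith [mul_nonneg hR.le this]
  · have h1 : 2 ^ n * R ≤ ‖x‖ := not_lt.1 (Nat.find_min hex (by omega))
    have h2 : (2 ^ n) ^ 2 ≤ ‖x‖ ^ 2 / R ^ 2 := by
      rw [le_div_iff₀ (by positivity), ← mul_pow]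
      gcongr
    have h3 : (4 : ℝ) * (1 / 4) ^ (n + 1) / R = 1 / (R * (2 ^ n) ^ 2) := by
      rw [pow_succ, ← pow_mul, mul_comm n 2, pow_mul]
      norm_num
      field_simp
      rw [← mul_pow]
      norm_num
    rw [h3]
    unfold psiR
    gcongr
    linarith

lemma lintegral_mul_psiR_le {d : ℕ} {R : ℝ} (hR : 0 < R) (g : Ed d → ℝ≥0∞)
    (hg : Measurable g) :
    ∫⁻ x, g x * ENNReal.ofReal (psiR R x) ≤ ENNReal.ofReal 8 * nX2 g := by
  set c : ℕ → ℝ≥0∞ := fun n => ENNReal.ofReal (4 * (1 / 4) ^ n / R) with hc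
  set F : ℕ → Ed d → ℝ≥0∞ := fun n => (ball (0 : Ed d) (2 ^ n * R)).indicator (fun x => c n * g x)
    with hF
  have hpt : ∀ x, g x * ENNReal.ofReal (psiR R x) ≤ ∑' n, F n x := by
    intro x
    obtain ⟨n, hn, hle⟩ := exists_psiR_le hR x
    calc g x * ENNReal.ofReal (psiR R x) ≤ g x * c n := by
          gcongr
          exact ENNReal.ofReal_le_ofReal hle
      _ = F n x := by rw [hF, mul_comm]; exact (indicator_of_mem hn (fun x => c n * g x)).symm
      _ ≤ _ := ENNReal.le_tsum n
  have hsum : ∑' n : ℕ, ENNReal.ofReal (4 * (1 / 2) ^ n) = ENNReal.ofReal 8 := by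
    rw [← ENNReal.ofReal_tsum_of_nonneg (fun n => by positivity)
      (summable_geometric_two.mul_left 4), tsum_mul_left, tsum_geometric_two]
    norm_num
  calc ∫⁻ x, g x * ENNReal.ofReal (psiR R x) ≤ ∫⁻ x, ∑' n, F n x := lintegral_mono hpt
    _ = ∑' n, ∫⁻ x, F n x := lintegral_tsum fun n =>
        ((hg.const_mul _).indicator measurableSet_ball).aemeasurable
    _ ≤ ∑' n : ℕ, ENNReal.ofReal (4 * (1 / 2) ^ n) * nX2 g := by
        refine ENNReal.tsum_le_tsum fun n => ?_
        rw [hF, lintegral_indicator measurableSet_ball, lintegral_const_mul _ hg]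
        calc c n * ∫⁻ x in ball (0 : Ed d) (2 ^ n * R), g x
            ≤ c n * (ENNReal.ofReal (2 ^ n * R) * nX2 g) := by
              gcongr
              exact setLIntegral_ball_le_s19 g (by positivity)
          _ = _ := by
              rw [← mul_assoc, hc, ← ENNReal.ofReal_mul (by positivity)]
              congr 2
              rw [show (1 / 4 : ℝ) = 1 / 2 * (1 / 2) by norm_num, mul_pow]
              field_simp
              norm_num [← mul_pow]
    _ = _ := by rw [ENNReal.tsum_mul_right, hsum]

lemma measurableSet_shell (d : ℕ) (j : ℤ) : MeasurableSet (shell d j) :=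
  (measurableSet_lt measurable_const measurable_norm).inter
    (measurableSet_le measurable_norm measurable_const)

lemma pairwise_disjoint_shell (d : ℕ) : Pairwise (Function.onFun Disjoint (shell d)) := by
  have key : ∀ i j : ℤ, i < j → Disjoint (shell d i) (shell d j) := by
    intro i j hij
    refine Set.disjoint_left.2 fun x hi hj => ?_
    have : (2 : ℝ) ^ (i + 1) ≤ 2 ^ j := zpow_le_zpow_right₀ one_le_two hij
    exact absurd (hi.2.trans this) (not_le.2 hj.1)
  intro i j hij
  rcases lt_or_gt_of_ne hij with h | h
  · exact key i j h
  · exact (key j i h).symm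

/-- The lower bound `R + 4^j / R` for `ψ_R⁻¹` on the dyadic shell `C_j`. -/
def shellWeight (R : ℝ) (j : ℤ) : ℝ := R * (1 + ((2 : ℝ) ^ j) ^ 2 / R ^ 2)

lemma shellWeight_pos {R : ℝ} (hR : 0 < R) (j : ℤ) : 0 < shellWeight R j := by
  unfold shellWeight; positivity

lemma tsum_shellWeight_le {d : ℕ} {R : ℝ} (hR : 0 < R) (g : Ed d → ℝ≥0∞) :
    ∑' j : ℤ, ENNReal.ofReal (shellWeight R j) * ∫⁻ x in shell d j, g x
      ≤ ∫⁻ x, g x * ENNReal.ofReal ((psiR R x)⁻¹) := by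
  calc ∑' j : ℤ, ENNReal.ofReal (shellWeight R j) * ∫⁻ x in shell d j, g x
      ≤ ∑' j : ℤ, ∫⁻ x in shell d j, g x * ENNReal.ofReal ((psiR R x)⁻¹) := by
        refine ENNReal.tsum_le_tsum fun j => ?_
        rw [← lintegral_const_mul' _ _ ENNReal.ofReal_ne_top]
        refine setLIntegral_mono' (measurableSet_shell d j) fun x hx => ?_
        rw [mul_comm]
        gcongr
        unfold shellWeight psiR
        rw [one_div, inv_inv]
        have := hx.1.le
        gcongr
    _ = ∫⁻ x in ⋃ j, shell d j, g x * ENNReal.ofReal ((psiR R x)⁻¹) :=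
        (lintegral_iUnion (measurableSet_shell d) (pairwise_disjoint_shell d) _).symm
    _ ≤ _ := setLIntegral_le_lintegral _ _

/-- If `2^k ≤ R < 2^(k+1)`, the Cauchy–Schwarz coefficients `2^(j+1) / (R + 4^j / R)`
decay geometrically in `|j - k|`. -/
lemma div_shellWeight_le {R : ℝ} (hR : 0 < R) {k : ℤ} (h1 : (2 : ℝ) ^ k ≤ R)
    (h2 : R < (2 : ℝ) ^ (k + 1)) (m : ℤ) :
    (2 : ℝ) ^ (m + k + 1) / shellWeight R (m + k) ≤ 4 * (1 / 2) ^ m.natAbs := by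
  have hw : shellWeight R (m + k) = R + ((2 : ℝ) ^ (m + k)) ^ 2 / R := by
    unfold shellWeight; field_simp
  rw [div_le_iff₀ (shellWeight_pos hR _), hw]
  rw [zpow_add_one₀ two_ne_zero] at h2 ⊢
  rw [zpow_add₀ two_ne_zero]
  set K : ℝ := 2 ^ k with hK
  have hKpos : 0 < K := by positivity
  rcases Int.natAbs_eq m with hm | hm
  -- for `m ≥ 0` the term `4^j / R` dominates
  · set n := m.natAbs
    rw [hm, zpow_natCast]
    have h3 : K ^ 2 / R ≥ K / 2 := by
      rw [ge_iff_le, div_le_div_iff₀ two_pos hR]; nlinarith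
    have h4 : (1 / 2 : ℝ) ^ n * 2 ^ n = 1 := by rw [← mul_pow]; norm_num
    have h5 : (4 : ℝ) * (1 / 2) ^ n * (R + (2 ^ n * K) ^ 2 / R)
        = 4 * (1 / 2) ^ n * R + 4 * ((1 / 2) ^ n * 2 ^ n) * 2 ^ n * (K ^ 2 / R) := by ring
    rw [h5, h4]
    have h6 : (0 : ℝ) < 2 ^ n := by positivity
    have h7 : 0 ≤ (4 : ℝ) * (1 / 2) ^ n * R := by positivity
    nlinarith
  -- for `m ≤ 0` the term `R` dominates
  · set n := m.natAbs
    rw [hm, zpow_neg, zpow_natCast, ← inv_pow, ← one_div]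
    have h6 : (0 : ℝ) < (1 / 2) ^ n := by positivity
    have h7 : 0 ≤ ((1 / 2) ^ n * K) ^ 2 / R := by positivity
    nlinarith [mul_nonneg h6.le h7, mul_le_mul_of_nonneg_left h1 h6.le]

lemma summable_half_pow_natAbs : Summable fun m : ℤ => (1 / 2 : ℝ) ^ m.natAbs :=
  Summable.of_nat_of_neg (by simpa using summable_geometric_two)
    (by simpa using summable_geometric_two)

lemma tsum_div_shellWeight_le {R : ℝ} (hR : 0 < R) :
    ∑' j : ℤ, ENNReal.ofReal ((2 : ℝ) ^ (j + 1) / shellWeight R j)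
      ≤ ENNReal.ofReal (4 * ∑' m : ℤ, (1 / 2 : ℝ) ^ m.natAbs) := by
  obtain ⟨k, h1, h2⟩ := exists_mem_Ico_zpow hR one_lt_two
  rw [← (Equiv.addRight k).tsum_eq, ← tsum_mul_left,
    ENNReal.ofReal_tsum_of_nonneg (fun m => by positivity) (summable_half_pow_natAbs.mul_left 4)]
  exact ENNReal.tsum_le_tsum fun m => ENNReal.ofReal_le_ofReal (div_shellWeight_le hR h1 h2 m)

/-- The Cauchy–Schwarz inequality for sums in `[0, ∞]`. -/
lemma tsum_rpow_half_sq_le (a b : ℤ → ℝ≥0∞) :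
    (∑' j, (a j * b j) ^ (1 / 2 : ℝ)) ^ 2 ≤ (∑' j, a j) * ∑' j, b j := by
  have h := ENNReal.lintegral_mul_le_Lp_mul_Lq (Measure.count : Measure ℤ)
    Real.HolderConjugate.two_two (f := fun j => a j ^ (1 / 2 : ℝ))
    (g := fun j => b j ^ (1 / 2 : ℝ)) (measurable_of_countable _).aemeasurable
    (measurable_of_countable _).aemeasurable
  have e : ∀ t : ℝ≥0∞, (t ^ (1 / 2 : ℝ)) ^ (2 : ℝ) = t := fun t => by
    rw [← ENNReal.rpow_mul]; norm_num
  simp only [lintegral_count, Pi.mul_apply, e] at h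
  simp only [ENNReal.mul_rpow_of_nonneg _ _ (by norm_num : (0 : ℝ) ≤ 1 / 2)]
  calc _ ≤ ((∑' j, a j) ^ (1 / 2 : ℝ) * (∑' j, b j) ^ (1 / 2 : ℝ)) ^ 2 := by gcongr
    _ = _ := by rw [mul_pow, ← ENNReal.rpow_two, ← ENNReal.rpow_two, e, e]

lemma nXstar_sq_le {d : ℕ} {R : ℝ} (hR : 0 < R) (g : Ed d → ℝ≥0∞) :
    nXstar g ^ 2 ≤ ENNReal.ofReal (4 * ∑' m : ℤ, (1 / 2 : ℝ) ^ m.natAbs) *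
      ∫⁻ x, g x * ENNReal.ofReal ((psiR R x)⁻¹) := by
  have h : nXstar g = ∑' j : ℤ, (ENNReal.ofReal ((2 : ℝ) ^ (j + 1) / shellWeight R j) *
      (ENNReal.ofReal (shellWeight R j) * ∫⁻ x in shell d j, g x)) ^ (1 / 2 : ℝ) := by
    unfold nXstar
    refine tsum_congr fun j => ?_
    have hw := shellWeight_pos hR j
    rw [← mul_assoc, ← ENNReal.ofReal_mul (by positivity), div_mul_cancel₀ _ hw.ne']
  rw [h]
  exact (tsum_rpow_half_sq_le _ _).trans
    (mul_le_mul' (tsum_div_shellWeight_le hR) (tsum_shellWeight_le hR g))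

/-- comparison of the weighted L²(ψ_R) norms with the
Morrey–Campanato norms, uniformly in R. -/
theorem stmt_19 (d : ℕ) (hd : 1 ≤ d) :
    ∃ C : ℝ, 0 < C ∧
      ∀ (R : ℝ), 0 < R →
      ∀ (g f : Ed d → ℂ), Measurable g → Measurable f →
      (∫⁻ x, usq g x * ENNReal.ofReal (psiR R x)) ≤ ENNReal.ofReal C * nX2 (usq g)
      ∧
      (nXstar (usq f)) ^ 2 ≤ ENNReal.ofReal C *
        ∫⁻ x, usq f x * ENNReal.ofReal ((psiR R x)⁻¹) := by
  have hS : 0 ≤ ∑' m : ℤ, (1 / 2 : ℝ) ^ m.natAbs := tsum_nonneg fun m => by positivity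
  refine ⟨8 + 4 * ∑' m : ℤ, (1 / 2 : ℝ) ^ m.natAbs, by positivity, ?_⟩
  intro R hR g f hg _
  have hgm : Measurable (usq g) := by unfold usq; fun_prop
  constructor
  · refine (lintegral_mul_psiR_le hR _ hgm).trans ?_
    gcongr
    linarith
  · refine (nXstar_sq_le hR _).trans ?_
    gcongr
    linarith
end
end
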